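/- Let P ∈ ℤ[x] be a nonzero polynomial with deg P ≤ d and L(P) ≤ L, where L ≥ 3. Then |P(π)| ≥ exp{ −2·10⁶ · d · (log L + d log d) · (1 + log d) }. -/

import Mathlib

/-!
The proof bounds integer polynomials from below at `ω = 2πi` by the method of interpolation
determinants, and then passes to `π`.

Let `β ≠ 0` be a root of an irreducible `Q ∈ ℤ[X]`. The matrix with entries the coefficients of
`u ^ t` in `(s β + log (1 + u)) ^ i * (1 + u) ^ k`, with rows `(s, t)`, `s < S`, `t < T`, and
columns `(i, k)`, `i < n`, `k < K`, has full column rank once `K (n - 1) < S (T - K + 1)`: a column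
relation is a family of polynomials `P k` such that `∑ P k (s β + log (1 + u)) * (1 + u) ^ k`
vanishes to order `T` at `u = 0` for every `s < S`, and a Wronskian argument (`zero_estimate`)
excludes this. So some maximal minor `Δ` is nonzero (`exists_minor`).

* Arithmetic. Up to the denominator `denom T n ^ (n K)`, `Δ` is the value at `β` of an integer
  polynomial of controlled degree and size (`exists_int_det`). As it is nonzero, its resultant with
  `Q` is a nonzero integer, whence a lower bound for `|Δ|` in terms of the Mahler measure and the
  degree of `Q` (`liouville`).
* Analysis. Since `exp (k s ω) = 1`, one has
  `(1 + u) ^ k = exp (k (s β + log (1 + u))) * exp (-k s (β - ω))`. Expanding both exponentials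
  factors the matrix through one indexed by `ℕ × ℕ`, and multilinearity of the determinant gives
  `|Δ| ≤ exp (-(n K)² / 2)` up to lower order factors as soon as `β` is very close to `ω`
  (`norm_det_sum_le`, `norm_interpDet_le`).

With `n = 60 S`, `T = 61 K`, `S` of order `D (1 + log D)` for `D ≥ deg Q`, and `K` of order
`log M(Q) + deg Q * log S`, the two bounds contradict each other (`parameters_ineq`), so `β` is not
too close to `ω` (`root_approx`). Applying this to the root of `Q` nearest to `ω`, and bounding
`|Q' (β)|` below by the Liouville inequality, gives a lower bound for `|Q (ω)|`
(`irreducible_bound`). It is multiplicative in `Q`, because the Mahler measure is, and therefore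
extends to all nonzero integer polynomials of degree at most `D` (`general_bound`).

Finally, for `P` of degree at most `d`, the polynomial `4 ^ d * P (X / 2i) * P (-X / 2i)` has integer
coefficients and takes the value `4 ^ d * P π * P (-π)` at `ω` (`exists_descent`).
-/

open Polynomial

/-- The length of an integer polynomial: the sum of the absolute values of its
coefficients. -/
noncomputable def polyLength (P : Polynomial ℤ) : ℝ :=
  ∑ i ∈ Finset.range (P.natDegree + 1), (|P.coeff i| : ℝ)

/-! ### Denominators of the coefficients of powers of the logarithm -/

theorem lcmUpto_dvd_mul_choose {m N : ℕ} (hm : m ≤ N) (hN : N ≤ 2 * m) :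
    Nat.lcmUpto N ∣ Nat.lcmUpto m * N.choose m := by
  have h0 : N.choose m ≠ 0 := (Nat.choose_pos hm).ne'
  rw [← Nat.factorization_le_iff_dvd (Nat.lcmUpto_ne_zero N)
    (mul_ne_zero (Nat.lcmUpto_ne_zero m) h0),
    Nat.factorization_mul (Nat.lcmUpto_ne_zero m) h0]
  intro p
  by_cases hp : p.Prime
  · rw [Finsupp.add_apply, Nat.factorization_lcmUpto _ hp, Nat.factorization_lcmUpto _ hp]
    rcases Nat.eq_zero_or_pos m with rfl | hm0
    · simp [show N = 0 by omega]
    rcases Nat.lt_or_ge m (p ^ p.log N) with h | h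
    · have hle : p ^ p.log N ≤ N := Nat.pow_log_le_self p (by omega)
      have h1 : p.log N ≤ p.log m + 1 := by
        rcases Nat.eq_zero_or_pos (p.log N) with h2 | h2
        · omega
        · have : p.log N - 1 ≤ p.log m := by
            apply Nat.le_log_of_pow_le hp.one_lt
            have h3 : p ^ (p.log N) = p ^ (p.log N - 1) * p := by
              rw [← pow_succ]; congr 1; omega
            have h4 := hp.two_le
            nlinarith
          omega
      have h5 : 1 ≤ (N.choose m).factorization p := by
        rw [Nat.factorization_choose hp hm (Nat.lt_succ_self _)]
        refine Finset.card_pos.mpr ⟨p.log N, ?_⟩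
        have h6 : 1 ≤ p.log N := by
          by_contra h7
          have : p.log N = 0 := by omega
          rw [this] at h; simp at h; omega
        simp only [Finset.mem_filter, Finset.mem_Ico]
        refine ⟨⟨h6, Nat.lt_succ_self _⟩, ?_⟩
        rw [Nat.mod_eq_of_lt h, Nat.mod_eq_of_lt (by omega)]
        omega
      omega
    · have := Nat.le_log_of_pow_le hp.one_lt h
      omega
  · simp [Nat.factorization_eq_zero_of_not_prime _ hp]

/-- The Chebyshev-type bound used to control the denominators. -/
theorem lcmUpto_le_four_pow (n : ℕ) : Nat.lcmUpto n ≤ 4 ^ n := by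
  induction n using Nat.strong_induction_on with
  | _ n ih =>
    rcases Nat.lt_or_ge n 2 with h | h
    · interval_cases n <;> simp [Nat.lcmUpto]
    rcases Nat.even_or_odd' n with ⟨k, rfl | rfl⟩
    · have h1 := Nat.le_of_dvd (Nat.mul_pos (Nat.lcmUpto_pos k) (Nat.choose_pos (by omega)))
        (lcmUpto_dvd_mul_choose (m := k) (N := 2 * k) (by omega) (by omega))
      have h2 := ih k (by omega)
      have h3 : (2 * k).choose k ≤ 4 ^ k := by
        have := Nat.choose_le_two_pow (2 * k) k
        rwa [pow_mul] at this
      calc _ ≤ _ := h1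
        _ ≤ 4 ^ k * 4 ^ k := Nat.mul_le_mul h2 h3
        _ = 4 ^ (2 * k) := by rw [← pow_add]; congr 1; omega
    · have h1 := Nat.le_of_dvd (Nat.mul_pos (Nat.lcmUpto_pos (k + 1)) (Nat.choose_pos (by omega)))
        (lcmUpto_dvd_mul_choose (m := k + 1) (N := 2 * k + 1) (by omega) (by omega))
      have h2 := ih (k + 1) (by omega)
      have h3 : (2 * k + 1).choose (k + 1) ≤ 4 ^ k := by
        rw [Nat.choose_symm_half]
        exact Nat.choose_middle_le_pow k
      calc _ ≤ _ := h1
        _ ≤ 4 ^ (k + 1) * 4 ^ k := Nat.mul_le_mul h2 h3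
        _ = 4 ^ (2 * k + 1) := by rw [← pow_add]; congr 1; omega

/-- A common multiple of all products of at most `l` positive integers with sum at most `T`. -/
def denom (T l : ℕ) : ℕ := ∏ j ∈ Finset.range l, Nat.lcmUpto (T / (j + 1))

theorem denom_pos (T l : ℕ) : 0 < denom T l :=
  Finset.prod_pos fun _ _ => Nat.lcmUpto_pos _

/-- The smallest of `l` positive integers with sum at most `T` is at most `T / l`; the remaining
ones are treated by induction. -/
theorem multiset_prod_dvd_denom (T : ℕ) : ∀ (l : ℕ) (s : Multiset ℕ), Multiset.card s = l →
    (∀ a ∈ s, 0 < a) → s.sum ≤ T → s.prod ∣ denom T l := by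
  intro l
  induction l with
  | zero => intro s hs _ _; rw [Multiset.card_eq_zero.mp hs]; simp
  | succ l ih =>
    intro s hs hpos hsum
    obtain ⟨a, ha, hmin⟩ : ∃ a ∈ s, ∀ b ∈ s, a ≤ b := by
      have : s.toFinset.Nonempty := by
        rw [Multiset.toFinset_nonempty]; rintro rfl; simp at hs
      obtain ⟨a, ha, h⟩ := Finset.exists_min_image s.toFinset id this
      exact ⟨a, by simpa using ha, fun b hb => h b (by simpa using hb)⟩
    have hle : a * (l + 1) ≤ T := by
      have := Multiset.card_nsmul_le_sum hmin
      rw [hs, smul_eq_mul] at this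
      nlinarith
    obtain ⟨s', rfl⟩ := Multiset.exists_cons_of_mem ha
    rw [Multiset.prod_cons, denom, Finset.prod_range_succ, mul_comm]
    refine Nat.mul_dvd_mul (ih s' (by simpa using hs) (fun b hb => hpos b (by simp [hb]))
      (by rw [Multiset.sum_cons] at hsum; omega)) ?_
    exact Finset.dvd_lcm (f := id) (Finset.mem_Icc.mpr ⟨hpos a (by simp),
      (Nat.le_div_iff_mul_le (Nat.succ_pos l)).mpr hle⟩)

/-- The bound `lcm (1, …, m) ≤ 4 ^ m`, summed over `m = T / (j + 1)`, produces the harmonic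
sum `1 + log l`. -/
theorem log_denom_le (T l : ℕ) :
    Real.log (denom T l) ≤ Real.log 4 * T * (1 + Real.log l) := by
  have h4 : (0:ℝ) ≤ Real.log 4 := Real.log_nonneg (by norm_num)
  have h1 : Real.log (denom T l) = ∑ j ∈ Finset.range l, Real.log (Nat.lcmUpto (T / (j + 1))) := by
    rw [denom, Nat.cast_prod, Real.log_prod]
    intro j _
    exact_mod_cast Nat.lcmUpto_ne_zero _
  rw [h1]
  calc _ ≤ ∑ j ∈ Finset.range l, Real.log 4 * T * ((j:ℝ) + 1)⁻¹ := by
        refine Finset.sum_le_sum fun j _ => ?_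
        have h2 : (Nat.lcmUpto (T / (j + 1)) : ℝ) ≤ 4 ^ (T / (j + 1)) := by
          exact_mod_cast lcmUpto_le_four_pow _
        have h3 := Real.log_le_log (by exact_mod_cast Nat.lcmUpto_pos _) h2
        rw [Real.log_pow] at h3
        have h5 : ((T / (j + 1) : ℕ) : ℝ) ≤ T / ((j + 1 : ℕ) : ℝ) := Nat.cast_div_le
        push_cast at h5
        calc _ ≤ _ := h3
          _ ≤ (T / ((j:ℝ) + 1)) * Real.log 4 := mul_le_mul_of_nonneg_right h5 h4
          _ = _ := by rw [div_eq_mul_inv]; ring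
    _ = Real.log 4 * T * ((harmonic l : ℚ) : ℝ) := by
        rw [← Finset.mul_sum, harmonic]; push_cast; rfl
    _ ≤ _ := by
        refine mul_le_mul_of_nonneg_left (harmonic_le_one_add_log l) (by positivity)

/-- `N` is a multiple of each product of at most `l` positive integers with sum at most `t`. -/
def ClearsDenoms (l t N : ℕ) : Prop :=
  ∀ s : Multiset ℕ, Multiset.card s ≤ l → (∀ a ∈ s, 0 < a) → s.sum ≤ t → s.prod ∣ N

theorem clearsDenoms_denom {l n t T : ℕ} (hl : l ≤ n) (ht : t ≤ T) :
    ClearsDenoms l t (denom T n) := by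
  intro s hs hpos hsum
  refine (multiset_prod_dvd_denom T _ s rfl hpos (hsum.trans ht)).trans ?_
  exact Finset.prod_dvd_prod_of_subset _ _ _ (Finset.range_subset_range.mpr (hs.trans hl))

/-- The coefficient of `u ^ t` in `log (1 + u) ^ l * (1 + u) ^ k`. -/
noncomputable def logCoeff (t l k : ℕ) : ℂ :=
  PowerSeries.coeff t (PowerSeries.log ℂ ^ l * (1 + PowerSeries.X) ^ k)

theorem logCoeff_zero (t k : ℕ) : logCoeff t 0 k = (k.choose t : ℂ) := by
  rw [logCoeff, pow_zero, one_mul]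
  have : ((1 + PowerSeries.X) ^ k : PowerSeries ℂ) = (((1 + Polynomial.X) ^ k : ℂ[X]) : PowerSeries ℂ) := by
    simp
  rw [this, Polynomial.coeff_coe, Polynomial.coeff_one_add_X_pow]

theorem logCoeff_succ (t l k : ℕ) : logCoeff t (l + 1) k =
    ∑ p ∈ Finset.HasAntidiagonal.antidiagonal t,
      (if p.1 = 0 then 0 else (-1 : ℂ) ^ (p.1 + 1) / p.1) * logCoeff p.2 l k := by
  rw [logCoeff, pow_succ', mul_assoc, PowerSeries.coeff_mul]
  refine Finset.sum_congr rfl fun p _ => ?_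
  rw [PowerSeries.coeff_log, logCoeff]
  congr 1
  split_ifs <;> simp

/-- The denominators of the coefficients of `log (1 + u) ^ l` are products of `l` positive integers
with sum at most `t`. -/
theorem logCoeff_integral (k l : ℕ) : ∀ t N : ℕ, ClearsDenoms l t N →
    ∃ z : ℤ, (z : ℂ) = N * logCoeff t l k := by
  induction l with
  | zero => intro t N _; exact ⟨N * k.choose t, by rw [logCoeff_zero]; push_cast; ring⟩
  | succ l ih =>
    intro t N hN
    rw [logCoeff_succ, Finset.mul_sum]
    have : ∀ p : ℕ × ℕ, ∃ z : ℤ, p ∈ Finset.HasAntidiagonal.antidiagonal t → (z : ℂ) =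
        N * ((if p.1 = 0 then 0 else (-1 : ℂ) ^ (p.1 + 1) / p.1) * logCoeff p.2 l k) := by
      rintro ⟨m, b⟩
      by_cases hp : (m, b) ∈ Finset.HasAntidiagonal.antidiagonal t
      swap
      · exact ⟨0, fun h => absurd h hp⟩
      rw [Finset.HasAntidiagonal.mem_antidiagonal] at hp
      simp only at hp
      rcases Nat.eq_zero_or_pos m with rfl | hm
      · exact ⟨0, fun _ => by simp⟩
      obtain ⟨N', rfl⟩ : m ∣ N := by
        have := hN {m} (by simp) (by simpa using hm) (by simp; omega)
        simpa using this
      obtain ⟨z, hz⟩ := ih b N' (by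
        intro s hs hpos hsum
        have := hN (m ::ₘ s) (by simpa using hs)
          (by intro a ha; rcases Multiset.mem_cons.mp ha with rfl | h; exacts [hm, hpos a h])
          (by simp; omega)
        rw [Multiset.prod_cons] at this
        exact Nat.dvd_of_mul_dvd_mul_left hm this)
      refine ⟨(-1) ^ (m + 1) * z, fun _ => ?_⟩
      have hm' : (m : ℂ) ≠ 0 := by exact_mod_cast hm.ne'
      simp only [hm.ne', if_false]
      push_cast
      rw [hz]
      field_simp
    choose f hf using this
    refine ⟨∑ p ∈ Finset.HasAntidiagonal.antidiagonal t, f p, ?_⟩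
    push_cast
    exact Finset.sum_congr rfl fun p hp => hf p hp

theorem norm_logCoeff_le (k l : ℕ) : ∀ t : ℕ, ‖logCoeff t l k‖ ≤ 2 ^ (t + k) := by
  induction l with
  | zero =>
    intro t
    rw [logCoeff_zero, Complex.norm_natCast]
    calc (k.choose t : ℝ) ≤ 2 ^ k := by exact_mod_cast Nat.choose_le_two_pow k t
      _ ≤ _ := pow_le_pow_right₀ (by norm_num) (by omega)
  | succ l ih =>
    intro t
    rw [logCoeff_succ]
    -- only the terms with positive first index contribute, and `∑_{m ≥ 1} 2⁻ᵐ ≤ 1`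
    have h1 : ∀ p ∈ Finset.HasAntidiagonal.antidiagonal t,
        ‖(if p.1 = 0 then 0 else (-1 : ℂ) ^ (p.1 + 1) / p.1) * logCoeff p.2 l k‖ ≤
        (if p.1 = 0 then 0 else (2:ℝ) ^ (p.2 + k)) := by
      rintro ⟨m, b⟩ _
      rcases Nat.eq_zero_or_pos m with rfl | hm
      · simp
      · simp only [hm.ne', if_false, norm_mul, norm_div, norm_pow, norm_neg, norm_one, one_pow,
          Complex.norm_natCast]
        have : (1:ℝ) / m ≤ 1 := by
          rw [div_le_one (by exact_mod_cast hm)]; exact_mod_cast hm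
        calc _ ≤ 1 * ‖logCoeff b l k‖ := mul_le_mul_of_nonneg_right this (norm_nonneg _)
          _ ≤ _ := by rw [one_mul]; exact ih b
    refine (norm_sum_le_of_le _ h1).trans ?_
    rw [Finset.Nat.sum_antidiagonal_eq_sum_range_succ_mk]
    rw [Finset.sum_range_succ']
    simp only [Nat.succ_ne_zero, if_false, if_true, add_zero]
    have h2 : ∑ m ∈ Finset.range t, (2:ℝ) ^ (t - (m + 1) + k) = (2 ^ t - 1) * 2 ^ k := by
      have h3 := Finset.sum_range_reflect (fun j => (2:ℝ) ^ (j + k)) t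
      have h4 : ∀ m ∈ Finset.range t, (2:ℝ) ^ (t - (m + 1) + k) = 2 ^ (t - 1 - m + k) := by
        intro m _; congr 2; omega
      rw [Finset.sum_congr rfl h4, h3]
      simp_rw [pow_add]
      rw [← Finset.sum_mul, geom_sum_eq (by norm_num)]
      norm_num
    rw [h2, pow_add]
    gcongr
    linarith

/-! ### The zero estimate -/

/-- The operator `∂ + k` on polynomials; it corresponds to `(1 + u) d/du` acting on
`P (a + log (1 + u)) * (1 + u) ^ k`. -/
noncomputable def shiftOp (k : ℕ) (P : ℂ[X]) : ℂ[X] := derivative P + C (k : ℂ) * P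

theorem shiftOp_iterate_natDegree_le (k j : ℕ) (P : ℂ[X]) :
    ((shiftOp k)^[j] P).natDegree ≤ P.natDegree := by
  induction j with
  | zero => simp
  | succ j ih =>
    rw [Function.iterate_succ_apply']
    refine (natDegree_add_le _ _).trans (max_le ?_ ?_)
    · exact (natDegree_derivative_le _).trans (by omega)
    · exact (natDegree_C_mul_le _ _).trans ih

theorem shiftOp_iterate_coeff (k j : ℕ) (P : ℂ[X]) :
    ((shiftOp k)^[j] P).coeff P.natDegree = (k : ℂ) ^ j * P.leadingCoeff := by
  induction j with
  | zero => simp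
  | succ j ih =>
    rw [Function.iterate_succ_apply', shiftOp, coeff_add, coeff_C_mul, ih, coeff_derivative,
      coeff_eq_zero_of_natDegree_lt]
    · ring
    · exact Nat.lt_succ_of_le (shiftOp_iterate_natDegree_le k j P)

theorem coeff_prod_sum_of_natDegree_le {ι : Type*} (s : Finset ι) (f : ι → ℂ[X]) (d : ι → ℕ)
    (h : ∀ i ∈ s, (f i).natDegree ≤ d i) :
    (∏ i ∈ s, f i).coeff (∑ i ∈ s, d i) = ∏ i ∈ s, (f i).coeff (d i) := by
  classical
  induction s using Finset.induction_on with
  | empty => simp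
  | insert a s ha ih =>
    rw [Finset.prod_insert ha, Finset.sum_insert ha, Finset.prod_insert ha,
      coeff_mul_add_eq_of_natDegree_le (h a (by simp)), ih fun i hi => h i (by simp [hi])]
    exact (natDegree_prod_le _ _).trans (Finset.sum_le_sum fun i hi => h i (by simp [hi]))

/-- The Wronskian-like matrix attached to exponents `κ` and polynomials `P`. -/
noncomputable def wronsk {m : ℕ} (κ : Fin m → ℕ) (P : Fin m → ℂ[X]) : Matrix (Fin m) (Fin m) ℂ[X] :=
  Matrix.of fun j c => (shiftOp (κ c))^[j] (P c)

/-- The coefficient of highest possible degree is a Vandermonde determinant times the product of the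
leading coefficients. -/
theorem wronsk_det_ne_zero {m : ℕ} (κ : Fin m → ℕ) (hκ : Function.Injective κ)
    (P : Fin m → ℂ[X]) (hP : ∀ c, P c ≠ 0) : (wronsk κ P).det ≠ 0 := by
  intro h0
  have h1 : (wronsk κ P).det.coeff (∑ c, (P c).natDegree) =
      (∏ c, (P c).leadingCoeff) * (Matrix.vandermonde fun c => (κ c : ℂ)).transpose.det := by
    rw [← Matrix.det_mul_row, Matrix.det_apply, Matrix.det_apply, finsetSum_coeff]
    refine Finset.sum_congr rfl fun σ _ => ?_
    rw [coeff_smul, coeff_prod_sum_of_natDegree_le]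
    · congr 1
      refine Finset.prod_congr rfl fun c _ => ?_
      simp only [wronsk, Matrix.of_apply, shiftOp_iterate_coeff, Matrix.transpose_apply,
        Matrix.vandermonde_apply]
      ring
    · intro c _
      exact shiftOp_iterate_natDegree_le _ _ _
  rw [h0, coeff_zero, Matrix.det_transpose] at h1
  have h2 : (Matrix.vandermonde fun c => (κ c : ℂ)).det ≠ 0 :=
    Matrix.det_vandermonde_ne_zero_iff.mpr fun a b hab => hκ (by exact_mod_cast hab)
  have h3 : ∏ c, (P c).leadingCoeff ≠ 0 :=
    Finset.prod_ne_zero_iff.mpr fun c _ => leadingCoeff_ne_zero.mpr (hP c)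
  exact mul_ne_zero h3 h2 h1.symm

theorem wronsk_det_natDegree_le {m n : ℕ} (κ : Fin m → ℕ)
    (P : Fin m → ℂ[X]) (hP : ∀ c, (P c).natDegree ≤ n) : (wronsk κ P).det.natDegree ≤ m * n := by
  rw [Matrix.det_apply]
  refine natDegree_sum_le_of_forall_le _ _ fun σ _ => ?_
  refine (natDegree_smul_le _ _).trans ((natDegree_prod_le _ _).trans ?_)
  calc _ ≤ ∑ _c : Fin m, n := Finset.sum_le_sum fun c _ =>
        (shiftOp_iterate_natDegree_le _ _ _).trans (hP c)
    _ = m * n := by simp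

/-- The series `a + log (1 + u)`. -/
noncomputable def shiftedLog (a : ℂ) : PowerSeries ℂ := PowerSeries.C a + PowerSeries.log ℂ

theorem theta_shiftedLog (a : ℂ) :
    (1 + PowerSeries.X) * PowerSeries.derivative ℂ (shiftedLog a) = 1 := by
  rw [shiftedLog, map_add, PowerSeries.derivative_C, zero_add, PowerSeries.deriv_log, add_mul,
    one_mul]
  ext n
  rcases n with _ | n
  · simp
  · rw [map_add, PowerSeries.coeff_succ_X_mul]
    simp [PowerSeries.coeff_one, pow_succ]

theorem constantCoeff_aeval_shiftedLog (a : ℂ) (W : ℂ[X]) :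
    PowerSeries.constantCoeff (aeval (shiftedLog a) W) = W.eval a := by
  rw [aeval_def, hom_eval₂]
  have h1 : (PowerSeries.constantCoeff (R := ℂ)).comp (algebraMap ℂ (PowerSeries ℂ)) =
      RingHom.id ℂ := by ext x; simp
  rw [h1, shiftedLog]
  simp [PowerSeries.constantCoeff_log, eval₂_id]

theorem theta_aeval (a : ℂ) (k : ℕ) (Q : ℂ[X]) :
    (1 + PowerSeries.X) * PowerSeries.derivative ℂ
      (aeval (shiftedLog a) Q * (1 + PowerSeries.X) ^ k) =
      aeval (shiftedLog a) (shiftOp k Q) * (1 + PowerSeries.X) ^ k := by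
  have h1 : PowerSeries.derivative ℂ (aeval (shiftedLog a) Q) =
      aeval (shiftedLog a) (derivative Q) * PowerSeries.derivative ℂ (shiftedLog a) := by
    rw [← smul_eq_mul]
    exact Derivation.map_aeval _ Q (shiftedLog a)
  have h2 : (1 + PowerSeries.X) * PowerSeries.derivative ℂ ((1 + PowerSeries.X) ^ k) =
      (k : PowerSeries ℂ) * (1 + PowerSeries.X) ^ k := by
    rw [PowerSeries.derivative_pow, map_add, PowerSeries.derivative_X, PowerSeries.derivative_one]
    rcases k with _ | k
    · simp
    · simp only [Nat.add_sub_cancel]; ring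
  have h3 := theta_shiftedLog a
  rw [Derivation.leibniz, h1, shiftOp, map_add, map_mul, smul_eq_mul, smul_eq_mul]
  have h4 : aeval (shiftedLog a) (C (k:ℂ)) = (k : PowerSeries ℂ) := by simp
  rw [h4]
  linear_combination aeval (shiftedLog a) Q * h2 +
    aeval (shiftedLog a) (derivative Q) * (1 + PowerSeries.X) ^ k * h3

theorem X_pow_dvd_theta {T : ℕ} {f : PowerSeries ℂ} (h : PowerSeries.X ^ (T + 1) ∣ f) :
    PowerSeries.X ^ T ∣ (1 + PowerSeries.X) * PowerSeries.derivative ℂ f := by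
  refine Dvd.dvd.mul_left ?_ _
  rw [PowerSeries.X_pow_dvd_iff] at h ⊢
  intro m hm
  rw [PowerSeries.coeff_derivative, h (m + 1) (by omega), zero_mul]

/-- The series `log (1 + u)` has order `1`, so substituting `a + log (1 + u)` preserves orders of
vanishing. -/
theorem X_sub_C_pow_dvd {a : ℂ} {W : ℂ[X]} {r : ℕ}
    (h : PowerSeries.X ^ r ∣ aeval (shiftedLog a) W) : (X - C a) ^ r ∣ W := by
  rcases eq_or_ne W 0 with rfl | hW
  · simp
  obtain ⟨W1, hW1, hnd⟩ := exists_eq_pow_rootMultiplicity_mul_and_not_dvd W hW a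
  set m := rootMultiplicity a W
  suffices r ≤ m by
    rw [hW1]; exact (pow_dvd_pow _ this).mul_right _
  have h1 : aeval (shiftedLog a) (X - C a) = PowerSeries.log ℂ := by
    rw [map_sub, aeval_X, aeval_C, shiftedLog, PowerSeries.algebraMap_apply]
    simp
  have h2 : IsUnit (aeval (shiftedLog a) W1) := by
    rw [PowerSeries.isUnit_iff_constantCoeff, constantCoeff_aeval_shiftedLog, isUnit_iff_ne_zero]
    intro h3
    exact hnd (dvd_iff_isRoot.mpr h3)
  rw [hW1, map_mul, map_pow, h1, h2.dvd_mul_right] at h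
  replace h : (r : ℕ∞) ≤ (PowerSeries.log ℂ ^ m).order :=
    PowerSeries.nat_le_order _ _ (PowerSeries.X_pow_dvd_iff.mp h)
  rw [PowerSeries.order_pow, PowerSeries.order_log, nsmul_one] at h
  exact_mod_cast h

/-- Applying `(1 + u) d/du` repeatedly to the given relation makes a combination of the columns of the
Wronskian matrix divisible by `u ^ (T - m + 1)`; Cramer's rule transfers this to its determinant. -/
theorem X_pow_dvd_det {m T : ℕ} (hm : 0 < m) (hT : m ≤ T) (a : ℂ) (κ : Fin m → ℕ) (P : Fin m → ℂ[X])
    (h : PowerSeries.X ^ T ∣ ∑ c, aeval (shiftedLog a) (P c) * (1 + PowerSeries.X) ^ κ c) :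
    PowerSeries.X ^ (T - m + 1) ∣ aeval (shiftedLog a) (wronsk κ P).det := by
  have h1 : ∀ j ≤ T, PowerSeries.X ^ (T - j) ∣
      ∑ c, aeval (shiftedLog a) ((shiftOp (κ c))^[j] (P c)) * (1 + PowerSeries.X) ^ κ c := by
    intro j
    induction j with
    | zero => intro _; simpa using h
    | succ j ih =>
      intro hj
      have h2 := ih (by omega)
      rw [show T - j = T - (j + 1) + 1 by omega] at h2
      have h3 := X_pow_dvd_theta h2
      rw [map_sum, Finset.mul_sum] at h3
      simp only [theta_aeval] at h3
      simpa only [Function.iterate_succ_apply'] using h3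
  set A : Matrix (Fin m) (Fin m) (PowerSeries ℂ) := (wronsk κ P).map (aeval (shiftedLog a)) with hA
  set v : Fin m → PowerSeries ℂ := fun c => (1 + PowerSeries.X) ^ κ c with hv
  have h4 : aeval (shiftedLog a) (wronsk κ P).det = A.det := by
    rw [AlgHom.map_det]; rfl
  have h5 : ∀ j, PowerSeries.X ^ (T - m + 1) ∣ (A.mulVec v) j := by
    intro j
    refine (pow_dvd_pow _ ?_).trans (h1 j (by omega))
    omega
  have h6 : A.det • v = A.adjugate.mulVec (A.mulVec v) := by
    rw [Matrix.mulVec_mulVec, Matrix.adjugate_mul, Matrix.smul_mulVec, Matrix.one_mulVec]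
  have h7 := congrFun h6 ⟨0, hm⟩
  rw [Pi.smul_apply, smul_eq_mul] at h7
  have h8 : PowerSeries.X ^ (T - m + 1) ∣ A.det * v ⟨0, hm⟩ := by
    rw [h7, Matrix.mulVec, dotProduct]
    exact Finset.dvd_sum fun j _ => (h5 j).mul_left _
  have h9 : IsUnit (v ⟨0, hm⟩) := by
    refine IsUnit.pow _ ?_
    rw [PowerSeries.isUnit_iff_constantCoeff]; simp
  rw [h4]
  exact h9.dvd_mul_right.mp h8

/-- The zero estimate when no polynomial vanishes: the Wronskian determinant has degree at most `m * n`
and vanishes to order `T - m + 1` at each of the `S` distinct points `s * β`. -/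
theorem zero_estimate_aux {m n S T : ℕ} (hm : 0 < m) (hT : m ≤ T) (β : ℂ) (hβ : β ≠ 0)
    (κ : Fin m → ℕ) (hκ : Function.Injective κ) (P : Fin m → ℂ[X]) (hP : ∀ c, P c ≠ 0)
    (hn : ∀ c, (P c).natDegree ≤ n)
    (h : ∀ s < S, PowerSeries.X ^ T ∣
      ∑ c, aeval (shiftedLog (s * β)) (P c) * (1 + PowerSeries.X) ^ κ c) :
    S * (T - m + 1) ≤ m * n := by
  have h1 : ∏ s ∈ Finset.range S, (X - C ((s : ℂ) * β)) ^ (T - m + 1) ∣ (wronsk κ P).det := by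
    refine Finset.prod_dvd_of_coprime ?_ ?_
    · intro s _ s' _ hs
      refine IsCoprime.pow ?_
      refine isCoprime_X_sub_C_of_isUnit_sub ?_
      rw [isUnit_iff_ne_zero, ← sub_mul]
      refine mul_ne_zero (sub_ne_zero.mpr ?_) hβ
      exact_mod_cast hs
    · intro s hs
      exact X_sub_C_pow_dvd (X_pow_dvd_det hm hT _ κ P (h s (Finset.mem_range.mp hs)))
  have h2 := natDegree_le_of_dvd h1 (wronsk_det_ne_zero κ hκ P hP)
  rw [natDegree_prod _ _ fun s _ => pow_ne_zero _ (X_sub_C_ne_zero _)] at h2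
  simp only [natDegree_pow, natDegree_X_sub_C, mul_one, Finset.sum_const, Finset.card_range,
    smul_eq_mul] at h2
  exact h2.trans (wronsk_det_natDegree_le κ P hn)

/-- Zero estimate: a nonzero family `P` cannot produce functions
`∑ P k (s * β + log (1 + u)) * (1 + u) ^ k` all vanishing to order `T` at `u = 0`. -/
theorem zero_estimate {K n S T : ℕ} (hKT : K ≤ T) (β : ℂ) (hβ : β ≠ 0)
    (P : Fin K → ℂ[X]) (hn : ∀ c, (P c).natDegree ≤ n) (hS : K * n < S * (T - K + 1))
    (h : ∀ s < S, PowerSeries.X ^ T ∣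
      ∑ k, aeval (shiftedLog (s * β)) (P k) * (1 + PowerSeries.X) ^ (k : ℕ)) (k : Fin K) :
    P k = 0 := by
  classical
  by_contra hk
  set J : Finset (Fin K) := Finset.univ.filter fun k => P k ≠ 0 with hJ
  have hkJ : k ∈ J := by simp [hJ, hk]
  set e := J.equivFin.symm with he
  have hcard : J.card ≤ K := by simpa using J.card_le_univ
  have h1 := zero_estimate_aux (m := J.card) (n := n) (S := S) (T := T)
    (Finset.card_pos.mpr ⟨k, hkJ⟩) (by omega) β hβ (fun c => ((e c : Fin K) : ℕ))
    (fun a b hab => e.injective (Subtype.ext (Fin.ext hab))) (fun c => P (e c))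
    (fun c => (Finset.mem_filter.mp (e c).2).2)
    (fun c => hn _) (by
      intro s hs
      have h2 : ∑ k, aeval (shiftedLog (s * β)) (P k) * (1 + PowerSeries.X) ^ (k : ℕ) =
          ∑ c, aeval (shiftedLog (s * β)) (P (e c)) * (1 + PowerSeries.X) ^ ((e c : Fin K) : ℕ) := by
        rw [Equiv.sum_comp e (fun k : J => aeval (shiftedLog (s * β)) (P k) *
          (1 + PowerSeries.X) ^ ((k : Fin K) : ℕ)), Finset.sum_coe_sort J (fun k : Fin K =>
          aeval (shiftedLog (s * β)) (P k) * (1 + PowerSeries.X) ^ (k : ℕ))]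
        refine (Finset.sum_subset (Finset.subset_univ _) ?_).symm
        intro x _ hx
        have : P x = 0 := by simpa [hJ] using hx
        simp [this]
      rw [← h2]
      exact h s hs)
  have h3 : J.card * n ≤ K * n := Nat.mul_le_mul_right _ hcard
  have h4 : S * (T - K + 1) ≤ S * (T - J.card + 1) := Nat.mul_le_mul_left _ (by omega)
  omega

/-! ### The interpolation matrix -/

/-- The coefficient of `u ^ t` in `(s * y + log (1 + u)) ^ i * (1 + u) ^ k`. -/
noncomputable def entry (y : ℂ) (s t i k : ℕ) : ℂ :=
  PowerSeries.coeff t (shiftedLog (s * y) ^ i * (1 + PowerSeries.X) ^ k)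

theorem entry_eq (y : ℂ) (s t i k : ℕ) : entry y s t i k =
    ∑ l ∈ Finset.range (i + 1), ((s : ℂ) * y) ^ (i - l) * (i.choose l : ℂ) * logCoeff t l k := by
  rw [entry, shiftedLog, add_comm, add_pow, Finset.sum_mul, map_sum]
  refine Finset.sum_congr rfl fun l _ => ?_
  rw [logCoeff, show PowerSeries.log ℂ ^ l * PowerSeries.C ((s : ℂ) * y) ^ (i - l) *
    ((i.choose l : ℕ) : PowerSeries ℂ) * (1 + PowerSeries.X) ^ k =
    PowerSeries.C (((s : ℂ) * y) ^ (i - l) * (i.choose l : ℂ)) *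
      (PowerSeries.log ℂ ^ l * (1 + PowerSeries.X) ^ k) by
      simp only [map_mul, map_pow, map_natCast]; ring, PowerSeries.coeff_C_mul]

theorem norm_entry_le (y : ℂ) (s t i k : ℕ) :
    ‖entry y s t i k‖ ≤ 2 ^ (t + k) * (s * ‖y‖ + 1) ^ i := by
  rw [entry_eq, add_comm ((s:ℝ) * ‖y‖), add_pow, Finset.mul_sum]
  refine norm_sum_le_of_le _ fun l _ => ?_
  rw [norm_mul, norm_mul, norm_pow, norm_mul, Complex.norm_natCast, Complex.norm_natCast, one_pow,
    one_mul, mul_comm]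
  exact mul_le_mul_of_nonneg_right (norm_logCoeff_le k l t) (by positivity)

theorem exists_int_entry {T n s t i k : ℕ} (ht : t ≤ T) (hi : i < n) :
    ∃ A : ℤ[X], A.natDegree ≤ i ∧ ∀ y : ℂ, aeval y A = denom T n * entry y s t i k := by
  have h1 : ∀ l : ℕ, ∃ z : ℤ, l ∈ Finset.range (i + 1) → (z : ℂ) = denom T n * logCoeff t l k := by
    intro l
    by_cases hl : l ∈ Finset.range (i + 1)
    · obtain ⟨z, hz⟩ := logCoeff_integral k l t (denom T n)
        (clearsDenoms_denom (by have := Finset.mem_range.mp hl; omega) ht)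
      exact ⟨z, fun _ => hz⟩
    · exact ⟨0, fun h => absurd h hl⟩
  choose z hz using h1
  refine ⟨∑ l ∈ Finset.range (i + 1), C ((s : ℤ) ^ (i - l) * i.choose l * z l) * X ^ (i - l),
    ?_, fun y => ?_⟩
  · refine natDegree_sum_le_of_forall_le _ _ fun l _ => ?_
    exact (natDegree_C_mul_X_pow_le _ _).trans (Nat.sub_le _ _)
  · rw [entry_eq, map_sum, Finset.mul_sum]
    refine Finset.sum_congr rfl fun l hl => ?_
    have := hz l hl
    simp only [map_mul, aeval_C, aeval_X, map_pow, map_natCast]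
    simp only [algebraMap_int_eq, eq_intCast]
    rw [this]
    ring

theorem exists_det_submatrix_ne_zero {R C : Type*} [Fintype R] [Fintype C] [DecidableEq C]
    (A : Matrix R C ℂ) (hA : ∀ v : C → ℂ, A.mulVec v = 0 → v = 0) :
    ∃ f : C → R, (A.submatrix f id).det ≠ 0 := by
  have h1 : A.rank = Fintype.card C := by
    rw [Matrix.rank, LinearMap.finrank_range_of_inj, Module.finrank_fintype_fun_eq_card]
    exact (injective_iff_map_eq_zero _).mpr fun v hv => hA v hv
  rw [Matrix.rank_eq_finrank_span_row] at h1
  obtain ⟨κ, a, ha, hspan, hli⟩ := exists_linearIndependent' ℂ A.row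
  have : Finite κ := Finite.of_injective a ha
  have := Fintype.ofFinite κ
  have h2 : Fintype.card κ = Fintype.card C := by
    rw [← h1, ← hspan, finrank_span_eq_card hli]
  let e : C ≃ κ := (Fintype.equivOfCardEq h2).symm
  refine ⟨a ∘ e, ?_⟩
  have h3 : LinearIndependent ℂ (A.submatrix (a ∘ e) id).row := hli.comp e e.injective
  rw [Matrix.linearIndependent_rows_iff_isUnit, Matrix.isUnit_iff_isUnit_det] at h3
  exact h3.ne_zero

/-- Some maximal minor of the interpolation matrix is nonzero, by the zero estimate. -/
theorem exists_minor {K n S T : ℕ} (hKT : K ≤ T) (β : ℂ) (hβ : β ≠ 0)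
    (hS : K * (n - 1) < S * (T - K + 1)) :
    ∃ f : Fin n × Fin K → Fin S × Fin T,
      (Matrix.of fun μ l : Fin n × Fin K => entry β (f μ).1 (f μ).2 l.1 l.2).det ≠ 0 := by
  refine exists_det_submatrix_ne_zero
    (Matrix.of fun (μ : Fin S × Fin T) (l : Fin n × Fin K) => entry β μ.1 μ.2 l.1 l.2) ?_
  intro v hv
  have h1 := zero_estimate (n := n - 1) hKT β hβ
    (fun k : Fin K => ∑ i : Fin n, C (v (i, k)) * X ^ (i : ℕ))
    (fun k => natDegree_sum_le_of_forall_le _ _ fun i _ =>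
      (natDegree_C_mul_X_pow_le _ _).trans (by omega)) hS (by
    intro s hs
    rw [PowerSeries.X_pow_dvd_iff]
    intro t ht
    have h2 := congrFun hv (⟨s, hs⟩, ⟨t, ht⟩)
    rw [Matrix.mulVec, dotProduct, Fintype.sum_prod_type_right, Pi.zero_apply] at h2
    rw [map_sum, ← h2]
    refine Finset.sum_congr rfl fun k _ => ?_
    rw [map_sum, Finset.sum_mul, map_sum]
    refine Finset.sum_congr rfl fun i _ => ?_
    rw [map_mul (aeval _), aeval_C, map_pow, aeval_X, PowerSeries.algebraMap_apply, mul_assoc]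
    simp only [Algebra.algebraMap_self, RingHom.id_apply]
    rw [PowerSeries.coeff_C_mul, mul_comm]
    rfl)
  funext ⟨i, k⟩
  have h2 := congrArg (fun p => p.coeff (i : ℕ)) (h1 k)
  simp only [finsetSum_coeff, coeff_C_mul, coeff_X_pow, coeff_zero] at h2
  rw [Finset.sum_eq_single i] at h2
  · simpa using h2
  · intro j _ hj
    rw [if_neg, mul_zero]
    intro h; exact hj (Fin.ext h.symm)
  · simp

/-! ### Integrality of the determinant and the Liouville inequality -/

theorem norm_det_le_of_le {ι : Type*} [Fintype ι] [DecidableEq ι] (A : Matrix ι ι ℂ) (r c : ι → ℝ)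
    (h : ∀ μ l, ‖A μ l‖ ≤ r μ * c l) :
    ‖A.det‖ ≤ (Fintype.card ι).factorial * ((∏ μ, r μ) * ∏ l, c l) := by
  rw [Matrix.det_apply]
  have h1 : ∀ σ ∈ (Finset.univ : Finset (Equiv.Perm ι)),
      ‖Equiv.Perm.sign σ • ∏ i, A (σ i) i‖ ≤ (∏ μ, r μ) * ∏ l, c l := by
    intro σ _
    have h2 : ‖Equiv.Perm.sign σ • ∏ i, A (σ i) i‖ = ∏ i, ‖A (σ i) i‖ := by
      rw [← norm_prod]
      rcases Int.units_eq_one_or (Equiv.Perm.sign σ) with h | h <;> simp [h]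
    rw [h2, ← Equiv.prod_comp σ r, ← Finset.prod_mul_distrib]
    exact Finset.prod_le_prod (fun _ _ => norm_nonneg _) fun i _ => h _ _
  refine (norm_sum_le_of_le _ h1).trans ?_
  rw [Finset.sum_const, nsmul_eq_mul, Finset.card_univ, Fintype.card_perm]

/-- The sum `0 + 1 + ⋯ + (n - 1)`. -/
def tri (n : ℕ) : ℕ := ∑ i ∈ Finset.range n, i

theorem prod_pow_fst (n K : ℕ) (x : ℝ) :
    ∏ l : Fin n × Fin K, x ^ (l.1 : ℕ) = x ^ (K * tri n) := by
  rw [Finset.prod_pow_eq_pow_sum, Fintype.sum_prod_type]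
  simp only [Finset.sum_const, Finset.card_univ, Fintype.card_fin, smul_eq_mul]
  rw [← Finset.mul_sum, Fin.sum_univ_eq_sum_range (fun i => i) n, tri]

theorem prod_pow_snd (n K : ℕ) (x : ℝ) :
    ∏ l : Fin n × Fin K, x ^ (l.2 : ℕ) = x ^ (n * tri K) := by
  rw [Finset.prod_pow_eq_pow_sum, Fintype.sum_prod_type_right]
  simp only [Finset.sum_const, Finset.card_univ, Fintype.card_fin, smul_eq_mul]
  rw [← Finset.mul_sum, Fin.sum_univ_eq_sum_range (fun i => i) K, tri]

/-- The determinant of the interpolation matrix attached to a choice `f` of rows. -/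
noncomputable def interpDet {n K S T : ℕ} (f : Fin n × Fin K → Fin S × Fin T) (y : ℂ) : ℂ :=
  (Matrix.of fun μ l : Fin n × Fin K => entry y (f μ).1 (f μ).2 l.1 l.2).det

/-- The factor in front of `max 1 |y| ^ N` in the bound for the integral determinant at `y`. -/
noncomputable def detBound (n K S T : ℕ) : ℝ :=
  (n * K).factorial * ((denom T n * 2 ^ T) ^ (n * K) * (2 ^ (n * tri K) * S ^ (K * tri n)))

/-- After multiplication by the common denominators the interpolation determinant is an integer
polynomial in `y`. -/
theorem exists_int_det {n K S T : ℕ} (f : Fin n × Fin K → Fin S × Fin T) :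
    ∃ G : ℤ[X], G.natDegree ≤ K * tri n ∧
      (∀ y : ℂ, aeval y G = (denom T n : ℂ) ^ (n * K) * interpDet f y) ∧
      ∀ y : ℂ, ‖aeval y G‖ ≤ detBound n K S T * max 1 ‖y‖ ^ (K * tri n) := by
  choose A hA1 hA2 using fun μ l : Fin n × Fin K =>
    exists_int_entry (T := T) (n := n) (s := (f μ).1) (t := (f μ).2) (i := l.1) (k := l.2)
      (f μ).2.2.le l.1.2
  have hev : ∀ y : ℂ, aeval y (Matrix.of A).det =
      (Matrix.of fun μ l : Fin n × Fin K =>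
        denom T n * entry y (f μ).1 (f μ).2 l.1 l.2).det := by
    intro y
    rw [AlgHom.map_det]
    congr 1
    ext μ l
    simp [hA2]
  refine ⟨(Matrix.of A).det, ?_, ?_, ?_⟩
  · rw [Matrix.det_apply]
    refine natDegree_sum_le_of_forall_le _ _ fun σ _ => ?_
    refine (natDegree_smul_le _ _).trans ((natDegree_prod_le _ _).trans ?_)
    calc _ ≤ ∑ l : Fin n × Fin K, (l.1 : ℕ) := Finset.sum_le_sum fun c _ => hA1 _ _
      _ = K * tri n := by
        rw [Fintype.sum_prod_type]
        simp only [Finset.sum_const, Finset.card_univ, Fintype.card_fin, smul_eq_mul]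
        rw [← Finset.mul_sum, Fin.sum_univ_eq_sum_range (fun i => i) n, tri]
  · intro y
    rw [hev, interpDet]
    have := Matrix.det_smul (Matrix.of fun μ l : Fin n × Fin K =>
      entry y (f μ).1 (f μ).2 l.1 l.2) (denom T n : ℂ)
    rw [Fintype.card_prod, Fintype.card_fin, Fintype.card_fin] at this
    rw [← this]
    rfl
  · intro y
    rw [hev]
    refine (norm_det_le_of_le _ (fun _ => denom T n * 2 ^ T)
      (fun l => 2 ^ (l.2 : ℕ) * (S ^ (l.1 : ℕ) * max 1 ‖y‖ ^ (l.1 : ℕ))) ?_).trans ?_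
    · intro μ l
      rw [Matrix.of_apply, norm_mul, Complex.norm_natCast, mul_assoc]
      refine mul_le_mul_of_nonneg_left ?_ (by positivity)
      refine (norm_entry_le _ _ _ _ _).trans ?_
      rw [pow_add, mul_assoc, ← mul_pow (S:ℝ)]
      have h1 : ((f μ).1 : ℝ) * ‖y‖ + 1 ≤ S * max 1 ‖y‖ := by
        have h2 : ((f μ).1 : ℝ) + 1 ≤ S := by exact_mod_cast (f μ).1.2
        have h3 : ((f μ).1 : ℝ) * ‖y‖ ≤ (f μ).1 * max 1 ‖y‖ :=
          mul_le_mul_of_nonneg_left (le_max_right _ _) (by positivity)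
        have h4 : (1:ℝ) ≤ max 1 ‖y‖ := le_max_left _ _
        nlinarith
      gcongr
      · norm_num
      · exact (f μ).2.2.le
    · simp only [Finset.prod_mul_distrib]
      rw [prod_pow_snd, prod_pow_fst,
        prod_pow_fst, detBound]
      simp only [Finset.prod_const, Finset.card_univ, Fintype.card_prod, Fintype.card_fin]
      apply le_of_eq
      ring

/-- The Mahler measure of an integer polynomial. -/
noncomputable def mahlerZ (Q : ℤ[X]) : ℝ := (Q.map (Int.castRingHom ℂ)).mahlerMeasure

theorem eval_map_cast (G : ℤ[X]) (y : ℂ) : (G.map (Int.castRingHom ℂ)).eval y = aeval y G := by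
  rw [eval_map, aeval_def]; rfl

/-- A polynomial vanishing at one root of the irreducible `Q` vanishes at all of them. -/
theorem aeval_ne_zero_of_irreducible {Q G : ℤ[X]} (hQ : Irreducible Q) (hδ : Q.natDegree ≠ 0)
    {β b : ℂ} (hβ : aeval β Q = 0) (hG : aeval β G ≠ 0) (hb : aeval b Q = 0) :
    aeval b G ≠ 0 := by
  have hirr : Irreducible (Q.map (algebraMap ℤ ℚ)) :=
    ((hQ.isPrimitive hδ).irreducible_iff_irreducible_map_fraction_map (K := ℚ)).mp hQ
  have hcop : IsCoprime (Q.map (algebraMap ℤ ℚ)) (G.map (algebraMap ℤ ℚ)) := by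
    rw [hirr.coprime_iff_not_dvd]
    rintro ⟨R, hR⟩
    apply hG
    rw [← aeval_map_algebraMap ℚ, hR, map_mul, aeval_map_algebraMap, hβ, zero_mul]
  obtain ⟨u, v, huv⟩ := hcop
  intro h
  have := congrArg (aeval b) huv
  rw [map_add, map_mul, map_mul, aeval_map_algebraMap, aeval_map_algebraMap, hb, h] at this
  simp at this

/-- A Liouville inequality: the product of the values of `G` at the conjugates of `β` is, up to a
power of the leading coefficient, a nonzero integer, namely a resultant. -/
theorem liouville {Q G : ℤ[X]} (hQ : Irreducible Q) (hδ : Q.natDegree ≠ 0) {β : ℂ}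
    (hβ : aeval β Q = 0) (hG : aeval β G ≠ 0) {N : ℕ} (hN : G.natDegree ≤ N) {Γ : ℝ} (hΓ : 0 ≤ Γ)
    (hb : ∀ y : ℂ, ‖aeval y G‖ ≤ Γ * max 1 ‖y‖ ^ N) :
    1 ≤ ‖aeval β G‖ * Γ ^ (Q.natDegree - 1) * mahlerZ Q ^ N := by
  have hinj : Function.Injective (Int.castRingHom ℂ) := Int.cast_injective
  set q := Q.map (Int.castRingHom ℂ) with hq
  set g := G.map (Int.castRingHom ℂ) with hg
  have hq0 : q ≠ 0 := (Polynomial.map_ne_zero_iff hinj).mpr hQ.ne_zero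
  have hdeg : q.natDegree = Q.natDegree := natDegree_map_eq_of_injective hinj Q
  have hres : ((Q.resultant G Q.natDegree N : ℤ) : ℂ) =
      q.leadingCoeff ^ N * (q.roots.map fun x => g.eval x).prod := by
    rw [← resultant_eq_prod_eval q g N (natDegree_map_le.trans hN) (IsAlgClosed.splits q), hdeg,
      resultant_map_map]
    rfl
  have hne : ((Q.resultant G Q.natDegree N : ℤ) : ℂ) ≠ 0 := by
    rw [hres]
    refine mul_ne_zero (pow_ne_zero _ (leadingCoeff_ne_zero.mpr hq0)) ?_
    rw [Ne, Multiset.prod_eq_zero_iff, Multiset.mem_map]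
    rintro ⟨b, hbr, hb0⟩
    rw [mem_roots hq0, IsRoot, hq, eval_map_cast] at hbr
    rw [hg, eval_map_cast] at hb0
    exact aeval_ne_zero_of_irreducible hQ hδ hβ hG hbr hb0
  have hone : 1 ≤ ‖((Q.resultant G Q.natDegree N : ℤ) : ℂ)‖ := by
    rw [Complex.norm_intCast]
    exact_mod_cast Int.one_le_abs (by exact_mod_cast hne)
  have hβr : β ∈ q.roots := by
    rw [mem_roots hq0, IsRoot, hq, eval_map_cast]; exact hβ
  obtain ⟨r, hr⟩ := Multiset.exists_cons_of_mem hβr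
  have hcard : Multiset.card r = Q.natDegree - 1 := by
    have h1 : Multiset.card q.roots = q.natDegree := (IsAlgClosed.splits q).natDegree_eq_card_roots.symm
    rw [hr, Multiset.card_cons, hdeg] at h1
    omega
  refine hone.trans ?_
  rw [hres, mahlerZ, mahlerMeasure_eq_leadingCoeff_mul_prod_roots, ← hq, hr, Multiset.map_cons,
    Multiset.prod_cons, Multiset.map_cons, Multiset.prod_cons, norm_mul, norm_mul, norm_pow, hg,
    eval_map_cast]
  have hprod : ∀ s : Multiset ℂ, ‖(s.map fun x => (G.map (Int.castRingHom ℂ)).eval x).prod‖ ≤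
      Γ ^ (Multiset.card s) * (s.map fun a => max 1 ‖a‖).prod ^ N := by
    intro s
    induction s using Multiset.induction_on with
    | empty => simp
    | cons a s ih =>
      rw [Multiset.map_cons, Multiset.prod_cons, Multiset.map_cons, Multiset.prod_cons, norm_mul,
        Multiset.card_cons, eval_map_cast]
      calc _ ≤ (Γ * max 1 ‖a‖ ^ N) * (Γ ^ (Multiset.card s) *
            (s.map fun a => max 1 ‖a‖).prod ^ N) :=
            mul_le_mul (hb a) ih (norm_nonneg _) (by positivity)
        _ = _ := by ring
  have h2 := hprod r
  rw [hcard] at h2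
  have h3 : 0 ≤ (r.map fun a => max 1 ‖a‖).prod := by
    refine Multiset.prod_nonneg fun x hx => ?_
    obtain ⟨a, _, rfl⟩ := Multiset.mem_map.mp hx
    positivity
  have h4 : (1:ℝ) ≤ max 1 ‖β‖ ^ N := one_le_pow₀ (le_max_left _ _)
  calc _ ≤ ‖q.leadingCoeff‖ ^ N * (‖aeval β G‖ * (Γ ^ (Q.natDegree - 1) *
        (r.map fun a => max 1 ‖a‖).prod ^ N)) := by gcongr
    _ ≤ ‖q.leadingCoeff‖ ^ N * (‖aeval β G‖ * (Γ ^ (Q.natDegree - 1) *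
        (r.map fun a => max 1 ‖a‖).prod ^ N)) * max 1 ‖β‖ ^ N :=
        le_mul_of_one_le_right (by positivity) h4
    _ = _ := by ring

/-! ### Determinants of rapidly converging series -/

/-- Weights that are pairwise distinct below the number of indices have sum at least
`0 + 1 + ⋯ + (card ι - 1)`. -/
theorem sum_weights_ge {ι : Type*} [Fintype ι] (v : ι → ℕ)
    (hv : ∀ μ ν, v μ = v ν → v μ < Fintype.card ι → μ = ν) :
    tri (Fintype.card ι) ≤ ∑ μ, v μ := by
  classical
  set M := Fintype.card ι with hM
  have h1 : ∀ μ, ((Finset.range M).filter fun m => m < v μ).card ≤ v μ := by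
    intro μ
    calc _ ≤ (Finset.range (v μ)).card :=
          Finset.card_le_card fun m hm => Finset.mem_range.mpr (Finset.mem_filter.mp hm).2
      _ = v μ := Finset.card_range _
  refine le_trans ?_ (Finset.sum_le_sum fun μ _ => h1 μ)
  simp only [Finset.card_filter]
  rw [Finset.sum_comm, tri, ← Finset.sum_range_reflect]
  refine Finset.sum_le_sum fun m hm => ?_
  rw [Finset.mem_range] at hm
  rw [← Finset.card_filter]
  have h2 : (Finset.univ.filter fun μ => ¬ m < v μ).card ≤ m + 1 := by
    rw [← Finset.card_range (m + 1)]
    refine Finset.card_le_card_of_injOn v ?_ ?_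
    · intro μ hμ
      have : ¬ m < v μ := by simpa using hμ
      simp; omega
    · intro μ hμ ν _ h
      have : ¬ m < v μ := by simpa using hμ
      exact hv μ ν h (by omega)
  have h3 := Finset.card_filter_add_card_filter_not (s := (Finset.univ : Finset ι)) (fun μ => m < v μ)
  rw [Finset.card_univ] at h3
  omega

/-- A determinant whose rows are combinations of a common family of vectors `c p` is small as soon
as the coefficients decay exponentially in a weight that injective choices of indices cannot keep
small. -/
theorem norm_det_sum_le {ι α : Type*} [Fintype ι] [DecidableEq ι] [DecidableEq α] (x : ι → α → ℂ)
    (c : α → ι → ℂ) (F : Finset α) (w : α → ℕ) (W : ℕ) (r : α → ℝ) (V : ℝ) (B : ι → ℝ)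
    (hr : ∀ p, 0 ≤ r p) (hV : 0 ≤ V)
    (hc : ∀ φ : ι → α, ‖(Matrix.of fun μ l => c (φ μ) l).det‖ ≤ V * ∏ μ, r (φ μ))
    (hB : ∀ μ, ∑ p ∈ F, ‖x μ p‖ * r p * Real.exp (w p) ≤ B μ)
    (hW : ∀ φ : ι → α, Function.Injective φ → W ≤ ∑ μ, w (φ μ)) :
    ‖(Matrix.of fun μ l => ∑ p ∈ F, x μ p * c p l).det‖ ≤ V * Real.exp (-W) * ∏ μ, B μ := by
  have h1 : (Matrix.of fun μ l => ∑ p ∈ F, x μ p * c p l).det =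
      ∑ φ ∈ Fintype.piFinset fun _ : ι => F,
        (∏ μ, x μ (φ μ)) * (Matrix.of fun μ l => c (φ μ) l).det := by
    have h2 := (Matrix.detRowAlternating (n := ι) (R := ℂ)).toMultilinearMap.map_sum_finset
      (fun μ p => x μ p • c p) (fun _ => F)
    have h3 : (Matrix.of fun μ l => ∑ p ∈ F, x μ p * c p l).det =
        (Matrix.detRowAlternating (n := ι) (R := ℂ)).toMultilinearMap
          (fun μ => ∑ p ∈ F, x μ p • c p) := by
      show Matrix.det _ = Matrix.det _
      congr 1
      ext μ l
      simp [Finset.sum_apply]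
    rw [h3, h2]
    refine Finset.sum_congr rfl fun φ _ => ?_
    rw [MultilinearMap.map_smul_univ, smul_eq_mul]
    rfl
  have h4 : ∀ φ ∈ Fintype.piFinset fun _ : ι => F,
      ‖(∏ μ, x μ (φ μ)) * (Matrix.of fun μ l => c (φ μ) l).det‖ ≤
        V * Real.exp (-W) * ∏ μ, (‖x μ (φ μ)‖ * r (φ μ) * Real.exp (w (φ μ))) := by
    intro φ _
    have hnn : 0 ≤ V * Real.exp (-W) * ∏ μ, (‖x μ (φ μ)‖ * r (φ μ) * Real.exp (w (φ μ))) :=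
      mul_nonneg (by positivity) (Finset.prod_nonneg fun μ _ =>
        mul_nonneg (mul_nonneg (norm_nonneg _) (hr _)) (Real.exp_nonneg _))
    by_cases hφ : Function.Injective φ
    · have h5 : 1 ≤ Real.exp (-W) * ∏ μ, Real.exp (w (φ μ)) := by
        rw [← Real.exp_sum, ← Real.exp_add]
        refine Real.one_le_exp ?_
        have := hW φ hφ
        have : (W : ℝ) ≤ ∑ μ, (w (φ μ) : ℝ) := by exact_mod_cast this
        linarith
      rw [norm_mul, norm_prod, Finset.prod_mul_distrib, Finset.prod_mul_distrib]
      have h6 : 0 ≤ ∏ μ, r (φ μ) := Finset.prod_nonneg fun μ _ => hr _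
      calc _ ≤ (∏ μ, ‖x μ (φ μ)‖) * (V * ∏ μ, r (φ μ)) :=
            mul_le_mul_of_nonneg_left (hc φ) (by positivity)
        _ ≤ (∏ μ, ‖x μ (φ μ)‖) * (V * ∏ μ, r (φ μ)) *
            (Real.exp (-W) * ∏ μ, Real.exp (w (φ μ))) :=
            le_mul_of_one_le_right (by positivity) h5
        _ = _ := by ring
    · have h7 : (Matrix.of fun μ l => c (φ μ) l).det = 0 := by
        simp only [Function.Injective, not_forall] at hφ
        obtain ⟨a, b, hab, hne⟩ := hφ
        exact Matrix.det_zero_of_row_eq hne (by ext l; simp [hab])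
      rw [h7, mul_zero, norm_zero]
      exact hnn
  rw [h1]
  refine (norm_sum_le_of_le _ h4).trans ?_
  rw [← Finset.mul_sum, ← Finset.prod_univ_sum (fun _ => F)
    (fun μ p => ‖x μ p‖ * r p * Real.exp (w p))]
  refine mul_le_mul_of_nonneg_left ?_ (by positivity)
  refine Finset.prod_le_prod (fun μ _ => Finset.sum_nonneg fun p _ => ?_) fun μ _ => hB μ
  exact mul_nonneg (mul_nonneg (norm_nonneg _) (hr _)) (Real.exp_nonneg _)

/-- The differential equation `(1 + u) d/du (x + log (1 + u)) ^ (j + 1) = (j + 1) (x + log (1 + u)) ^ j`,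
read off on coefficients. -/
theorem shiftedLog_pow_coeff_rec (x : ℂ) (j t : ℕ) :
    ((t : ℂ) + 1) * PowerSeries.coeff (t + 1) (shiftedLog x ^ (j + 1)) +
      t * PowerSeries.coeff t (shiftedLog x ^ (j + 1)) =
      ((j : ℂ) + 1) * PowerSeries.coeff t (shiftedLog x ^ j) := by
  have h1 : (1 + PowerSeries.X) * PowerSeries.derivative ℂ (shiftedLog x ^ (j + 1)) =
      PowerSeries.C ((j : ℂ) + 1) * shiftedLog x ^ j := by
    rw [PowerSeries.derivative_pow, Nat.add_sub_cancel]
    have := theta_shiftedLog x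
    simp only [map_add, map_natCast, map_one]
    push_cast
    linear_combination ((j : PowerSeries ℂ) + 1) * shiftedLog x ^ j * this
  have h2 := congrArg (PowerSeries.coeff t) h1
  rw [PowerSeries.coeff_C_mul, add_mul, one_mul, map_add, PowerSeries.coeff_derivative] at h2
  rw [← h2]
  rcases t with _ | t
  · simp
  · rw [PowerSeries.coeff_succ_X_mul, PowerSeries.coeff_derivative]
    push_cast; ring

/-- Comparing coefficients in `exp (k * (x + log (1 + u))) = exp (k * x) * (1 + u) ^ k`. -/
theorem hasSum_shiftedLog_exp (x : ℂ) (k : ℕ) : ∀ t : ℕ,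
    HasSum (fun j : ℕ => (k : ℂ) ^ j / j.factorial * PowerSeries.coeff t (shiftedLog x ^ j))
      (Complex.exp (k * x) * k.choose t) := by
  intro t
  induction t with
  | zero =>
    have h1 : ∀ j, PowerSeries.coeff 0 (shiftedLog x ^ j) = x ^ j := by
      intro j
      rw [PowerSeries.coeff_zero_eq_constantCoeff, map_pow, shiftedLog]
      simp [PowerSeries.constantCoeff_log]
    have h2 := NormedSpace.expSeries_div_hasSum_exp ((k : ℂ) * x)
    rw [← Complex.exp_eq_exp_ℂ] at h2
    simp only [Nat.choose_zero_right, Nat.cast_one, mul_one]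
    have h3 : ∀ j : ℕ, (k : ℂ) ^ j / j.factorial * PowerSeries.coeff 0 (shiftedLog x ^ j) =
        ((k : ℂ) * x) ^ j / j.factorial := fun j => by rw [h1, mul_pow]; ring
    simp only [h3]
    exact h2
  | succ t ih =>
    have h1 : HasSum (fun j : ℕ => ((t : ℂ) + 1)⁻¹ * ((k : ℂ) * (if j = 0 then 0 else
        (k : ℂ) ^ (j - 1) / (j - 1).factorial * PowerSeries.coeff t (shiftedLog x ^ (j - 1))) - t *
        ((k : ℂ) ^ j / j.factorial * PowerSeries.coeff t (shiftedLog x ^ j))))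
        (((t : ℂ) + 1)⁻¹ * (k * (Complex.exp (k * x) * k.choose t) -
          t * (Complex.exp (k * x) * k.choose t))) := by
      refine HasSum.mul_left _ (HasSum.sub (HasSum.mul_left _ ?_) (ih.mul_left _))
      rw [← hasSum_nat_add_iff' 1]
      simpa using ih
    have ht : (t : ℂ) + 1 ≠ 0 := by exact_mod_cast t.succ_ne_zero
    convert h1 using 1
    · funext j
      rcases j with _ | j
      · rcases t with _ | t <;> simp [PowerSeries.coeff_one]
      · have h2 := shiftedLog_pow_coeff_rec x j t
        have h3 : ((j + 1).factorial : ℂ) = (j + 1) * j.factorial := by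
          rw [Nat.factorial_succ]; push_cast; ring
        have h4 : (j.factorial : ℂ) ≠ 0 := by exact_mod_cast j.factorial_ne_zero
        have h5 : (j : ℂ) + 1 ≠ 0 := by exact_mod_cast j.succ_ne_zero
        simp only [Nat.succ_ne_zero, if_false, Nat.add_sub_cancel, h3]
        rw [eq_inv_mul_iff_mul_eq₀ ht]
        field_simp
        linear_combination (k:ℂ) ^ (j+1) * h2
    · have h6 : (k.choose (t + 1) : ℂ) * (t + 1) = k.choose t * ((k : ℂ) - t) := by
        rcases le_or_gt t k with h | h
        · have := Nat.choose_succ_right_eq k t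
          rw [← Nat.cast_sub h]
          exact_mod_cast this
        · rw [Nat.choose_eq_zero_of_lt h, Nat.choose_eq_zero_of_lt (by omega)]; simp
      field_simp
      linear_combination h6

/-- The identity `exp (k * (x + log (1 + u))) = exp (k * x) * (1 + u) ^ k`, multiplied by
`(x + log (1 + u)) ^ i`. -/
theorem hasSum_entry (x : ℂ) (i k t : ℕ) :
    HasSum (fun j : ℕ => (k : ℂ) ^ j / j.factorial * PowerSeries.coeff t (shiftedLog x ^ (i + j)))
      (Complex.exp (k * x) *
        PowerSeries.coeff t (shiftedLog x ^ i * (1 + PowerSeries.X) ^ k)) := by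
  have h0 : ∀ t, PowerSeries.coeff t ((1 + PowerSeries.X) ^ k : PowerSeries ℂ) = k.choose t := by
    intro t
    have := logCoeff_zero t k
    rwa [logCoeff, pow_zero, one_mul] at this
  have h1 : ∀ p ∈ Finset.HasAntidiagonal.antidiagonal t,
      HasSum (fun j : ℕ => PowerSeries.coeff p.1 (shiftedLog x ^ i) *
        ((k : ℂ) ^ j / j.factorial * PowerSeries.coeff p.2 (shiftedLog x ^ j)))
        (PowerSeries.coeff p.1 (shiftedLog x ^ i) * (Complex.exp (k * x) * k.choose p.2)) :=
    fun p _ => (hasSum_shiftedLog_exp x k p.2).mul_left _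
  convert hasSum_sum h1 using 1
  · funext j
    rw [pow_add, PowerSeries.coeff_mul, Finset.mul_sum]
    exact Finset.sum_congr rfl fun p _ => by ring
  · rw [PowerSeries.coeff_mul, Finset.mul_sum]
    exact Finset.sum_congr rfl fun p _ => by rw [h0]; ring

/-! ### The analytic upper bound -/

/-- The period `2πi`. -/
noncomputable def omega : ℂ := 2 * Real.pi * Complex.I

/-- The coefficients with which the interpolation matrix factors through `ℕ × ℕ`; they do not depend
on the row. -/
noncomputable def colCoeff (p : ℕ × ℕ) (i k : ℕ) : ℂ :=
  (if i ≤ p.1 then (k : ℂ) ^ (p.1 - i) / (p.1 - i).factorial else 0) *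
    ((-(k : ℂ)) ^ p.2 / p.2.factorial)

theorem hasSum_mul_prod {f g : ℕ → ℂ} {a b : ℂ} (hf : HasSum f a) (hg : HasSum g b) :
    HasSum (fun p : ℕ × ℕ => f p.1 * g p.2) (a * b) :=
  hf.mul hg (summable_mul_of_summable_norm hf.summable.norm hg.summable.norm)

/-- The identity `(1 + u) ^ k = exp (k * (s * β + log (1 + u))) * exp (-k * s * (β - ω))`, valid
because `exp (k * s * ω) = 1`, expanded in double series. -/
theorem hasSum_entry_factor (β : ℂ) (s t i k : ℕ) :
    HasSum (fun p : ℕ × ℕ => (entry β s t p.1 0 * ((s : ℂ) * (β - omega)) ^ p.2) * colCoeff p i k)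
      (entry β s t i k) := by
  have h1 := hasSum_entry (s * β) i k t
  have h2 : HasSum (fun a : ℕ => (if i ≤ a then (k : ℂ) ^ (a - i) / (a - i).factorial else 0) *
      entry β s t a 0) (Complex.exp (k * (s * β)) * entry β s t i k) := by
    have hinj : Function.Injective fun j : ℕ => i + j := add_right_injective i
    rw [← hinj.hasSum_iff]
    · simpa [Function.comp_def, entry] using h1
    · intro a ha
      rw [if_neg, zero_mul]
      intro h
      exact ha ⟨a - i, by simp only; omega⟩
  have h3 : HasSum (fun b : ℕ => (-(k : ℂ)) ^ b / b.factorial * ((s : ℂ) * (β - omega)) ^ b)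
      (Complex.exp (-k * (s * (β - omega)))) := by
    have h2 := NormedSpace.expSeries_div_hasSum_exp (-(k : ℂ) * (s * (β - omega)))
    rw [← Complex.exp_eq_exp_ℂ] at h2
    have h3 : ∀ b : ℕ, (-(k : ℂ)) ^ b / b.factorial * ((s : ℂ) * (β - omega)) ^ b =
        (-(k : ℂ) * (s * (β - omega))) ^ b / b.factorial := fun b => by
      rw [mul_pow (-(k : ℂ))]; ring
    simp only [h3]
    exact h2
  have h4 := hasSum_mul_prod h2 h3
  have h5 : Complex.exp (k * (s * β)) * entry β s t i k * Complex.exp (-k * (s * (β - omega))) =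
      entry β s t i k := by
    have h6 : Complex.exp (k * (s * β)) * Complex.exp (-k * (s * (β - omega))) = 1 := by
      rw [← Complex.exp_add, Complex.exp_eq_one_iff]
      exact ⟨k * s, by rw [omega]; push_cast; ring⟩
    linear_combination entry β s t i k * h6
  rw [h5] at h4
  have h7 : ∀ p : ℕ × ℕ, entry β s t p.1 0 * ((s : ℂ) * (β - omega)) ^ p.2 * colCoeff p i k =
      (if i ≤ p.1 then (k : ℂ) ^ (p.1 - i) / (p.1 - i).factorial else 0) * entry β s t p.1 0 *
        ((-(k : ℂ)) ^ p.2 / p.2.factorial * ((s : ℂ) * (β - omega)) ^ p.2) := by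
    intro p
    rw [colCoeff]
    generalize (if i ≤ p.1 then (k : ℂ) ^ (p.1 - i) / (p.1 - i).factorial else 0) = A
    generalize (-(k : ℂ)) ^ p.2 / p.2.factorial = B
    generalize ((s : ℂ) * (β - omega)) ^ p.2 = C
    ring
  simp only [h7]
  exact h4

theorem norm_colCoeff_le {R : ℝ} (hR : 0 < R) (p : ℕ × ℕ) (i k : ℕ) :
    ‖colCoeff p i k‖ ≤ (R⁻¹) ^ p.1 * (R ^ i * Real.exp (R + 1) ^ k) := by
  obtain ⟨a, b⟩ := p
  have h1 : ‖(-(k : ℂ)) ^ b / b.factorial‖ ≤ Real.exp 1 ^ k := by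
    rw [norm_div, norm_pow, norm_neg, Complex.norm_natCast, Complex.norm_natCast, ← Real.exp_nat_mul,
      mul_one]
    exact Real.pow_div_factorial_le_exp _ (Nat.cast_nonneg k) b
  have h2 : ‖(if i ≤ a then (k : ℂ) ^ (a - i) / (a - i).factorial else 0)‖ ≤
      (R⁻¹) ^ a * (R ^ i * Real.exp R ^ k) := by
    split_ifs with h
    · rw [norm_div, norm_pow, Complex.norm_natCast, Complex.norm_natCast, ← Real.exp_nat_mul]
      have h3 := Real.pow_div_factorial_le_exp ((k : ℝ) * R) (by positivity) (a - i)
      have h4 : (R⁻¹) ^ a * R ^ i * R ^ (a - i) = 1 := by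
        rw [mul_assoc, ← pow_add, show i + (a - i) = a by omega, ← mul_pow, inv_mul_cancel₀ hR.ne',
          one_pow]
      calc (k : ℝ) ^ (a - i) / (a - i).factorial
          = (R⁻¹) ^ a * R ^ i * R ^ (a - i) * ((k : ℝ) ^ (a - i) / (a - i).factorial) := by
            rw [h4, one_mul]
        _ = (R⁻¹) ^ a * R ^ i * (((k : ℝ) * R) ^ (a - i) / (a - i).factorial) := by
            rw [mul_pow]; ring
        _ ≤ (R⁻¹) ^ a * R ^ i * Real.exp (k * R) := by gcongr
        _ = _ := by ring
    · rw [norm_zero]; positivity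
  rw [colCoeff, norm_mul]
  calc _ ≤ ((R⁻¹) ^ a * (R ^ i * Real.exp R ^ k)) * Real.exp 1 ^ k := by
        gcongr
    _ = _ := by rw [Real.exp_add, mul_pow]; ring

theorem sum_geometric_finset_le {q : ℝ} (h0 : 0 ≤ q) (h1 : q < 1) (F : Finset ℕ) :
    ∑ a ∈ F, q ^ a ≤ (1 - q)⁻¹ := by
  rw [← tsum_geometric_of_lt_one h0 h1]
  exact (summable_geometric_of_lt_one h0 h1).sum_le_tsum F fun _ _ => by positivity

theorem sum_two_geometric_le {q q' : ℝ} (h0 : 0 ≤ q) (h1 : q ≤ 10 / 11) (h0' : 0 ≤ q')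
    (h1' : q' ≤ 1 / 2) (F : Finset (ℕ × ℕ)) : ∑ p ∈ F, q ^ p.1 * q' ^ p.2 ≤ 22 := by
  classical
  calc ∑ p ∈ F, q ^ p.1 * q' ^ p.2
      ≤ ∑ p ∈ F.image Prod.fst ×ˢ F.image Prod.snd, q ^ p.1 * q' ^ p.2 :=
        Finset.sum_le_sum_of_subset_of_nonneg Finset.subset_product fun _ _ _ => by positivity
    _ = (∑ a ∈ F.image Prod.fst, q ^ a) * ∑ b ∈ F.image Prod.snd, q' ^ b := by
        rw [Finset.sum_mul_sum, Finset.sum_product]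
    _ ≤ 11 * 2 := by
        refine mul_le_mul ?_ ?_ (Finset.sum_nonneg fun _ _ => by positivity) (by norm_num)
        · refine (sum_geometric_finset_le h0 (by linarith) _).trans ?_
          rw [inv_le_comm₀ (by linarith) (by norm_num)]; linarith
        · refine (sum_geometric_finset_le h0' (by linarith) _).trans ?_
          rw [inv_le_comm₀ (by linarith) (by norm_num)]; linarith
    _ = 22 := by norm_num

/-- The analytic upper bound for the interpolation determinant when `β` is close to `2πi`. -/
theorem norm_interpDet_le {n K S T : ℕ} (f : Fin n × Fin K → Fin S × Fin T) (β : ℂ) {R : ℝ}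
    (hR0 : 0 < R) (hR : (S * ‖β‖ + 1) * Real.exp 1 ≤ 10 / 11 * R)
    (hz : S * ‖β - omega‖ * Real.exp 1 ^ (n * K) ≤ 1 / 2) :
    ‖interpDet f β‖ ≤ (n * K).factorial * (R ^ (K * tri n) * Real.exp (R + 1) ^ (n * tri K)) *
      Real.exp (-(tri (n * K) : ℕ)) * (2 ^ T * 22) ^ (n * K) := by
  classical
  set x : Fin n × Fin K → ℕ × ℕ → ℂ := fun μ p =>
    entry β (f μ).1 (f μ).2 p.1 0 * (((f μ).1 : ℂ) * (β - omega)) ^ p.2 with hx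
  set c : ℕ × ℕ → Fin n × Fin K → ℂ := fun p l => colCoeff p l.1 l.2 with hc
  have hcard : Fintype.card (Fin n × Fin K) = n * K := by simp
  have hbound : ∀ F : Finset (ℕ × ℕ), ‖(Matrix.of fun μ l => ∑ p ∈ F, x μ p * c p l).det‖ ≤
      (n * K).factorial * (R ^ (K * tri n) * Real.exp (R + 1) ^ (n * tri K)) *
      Real.exp (-(tri (n * K) : ℕ)) * (2 ^ T * 22) ^ (n * K) := by
    intro F
    have h := norm_det_sum_le x c F (fun p => p.1 + p.2 * (n * K)) (tri (n * K))
      (fun p => (R⁻¹) ^ p.1)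
      ((n * K).factorial * (R ^ (K * tri n) * Real.exp (R + 1) ^ (n * tri K)))
      (fun _ => 2 ^ T * 22) (fun p => by positivity) (by positivity) ?_ ?_ ?_
    · rw [Finset.prod_const, Finset.card_univ, hcard] at h
      exact h
    · intro φ
      have h1 := norm_det_le_of_le (Matrix.of fun μ l => c (φ μ) l) (fun μ => (R⁻¹) ^ (φ μ).1)
        (fun l => R ^ (l.1 : ℕ) * Real.exp (R + 1) ^ (l.2 : ℕ))
        (fun μ l => norm_colCoeff_le hR0 _ _ _)
      rw [hcard, Finset.prod_mul_distrib (s := (Finset.univ : Finset (Fin n × Fin K)))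
        (f := fun l => R ^ (l.1 : ℕ)), prod_pow_fst, prod_pow_snd] at h1
      refine h1.trans (le_of_eq ?_)
      ring
    · intro μ
      set s : ℕ := ((f μ).1 : ℕ) with hs
      set t : ℕ := ((f μ).2 : ℕ) with ht
      have hsS : (s : ℝ) ≤ S := by exact_mod_cast (f μ).1.2.le
      have htT : t ≤ T := (f μ).2.2.le
      have h1 : ∀ p ∈ F, ‖x μ p‖ * (R⁻¹) ^ p.1 * Real.exp ((p.1 + p.2 * (n * K) : ℕ) : ℝ) ≤
          2 ^ T * (((s * ‖β‖ + 1) * Real.exp 1 * R⁻¹) ^ p.1 *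
            (s * ‖β - omega‖ * Real.exp 1 ^ (n * K)) ^ p.2) := by
        rintro ⟨a, b⟩ _
        have h2 : ‖x μ (a, b)‖ ≤ 2 ^ T * (s * ‖β‖ + 1) ^ a * (s * ‖β - omega‖) ^ b := by
          simp only [hx]
          rw [norm_mul, norm_pow, norm_mul, Complex.norm_natCast]
          refine mul_le_mul_of_nonneg_right ?_ (by positivity)
          refine (norm_entry_le _ _ _ _ _).trans ?_
          rw [add_zero]
          gcongr
          norm_num
        have h3 : Real.exp ((a + b * (n * K) : ℕ) : ℝ) =
            Real.exp 1 ^ a * (Real.exp 1 ^ (n * K)) ^ b := by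
          rw [← pow_mul, ← pow_add, ← Real.exp_nat_mul, mul_one, mul_comm (n * K) b]
        simp only
        rw [h3]
        calc _ ≤ (2 ^ T * (s * ‖β‖ + 1) ^ a * (s * ‖β - omega‖) ^ b) * (R⁻¹) ^ a *
              (Real.exp 1 ^ a * (Real.exp 1 ^ (n * K)) ^ b) := by gcongr
          _ = _ := by simp only [mul_pow]; ring
      refine (Finset.sum_le_sum h1).trans ?_
      rw [← Finset.mul_sum]
      refine mul_le_mul_of_nonneg_left (sum_two_geometric_le (by positivity) ?_ (by positivity) ?_ F)
        (by positivity)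
      · rw [mul_inv_le_iff₀ hR0]
        refine le_trans ?_ hR
        gcongr
      · refine le_trans ?_ hz
        gcongr
    · intro φ hφ
      rw [← hcard]
      refine sum_weights_ge (fun μ => (φ μ).1 + (φ μ).2 * Fintype.card (Fin n × Fin K)) ?_
      intro μ ν h1 h2
      apply hφ
      -- weights below the size of the matrix force the second index to vanish
      have key : ∀ a b N : ℕ, a + b * N < N → b = 0 := by
        intro a b N h
        by_contra hb
        have := Nat.mul_le_mul_right N (Nat.one_le_iff_ne_zero.mpr hb)
        omega
      have h3 := key _ _ _ h2
      have h4 := key _ _ _ (h1 ▸ h2)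
      rw [h3, h4] at h1
      exact Prod.ext (by simpa using h1) (by rw [h3, h4])
  have hlim : Filter.Tendsto (fun F : Finset (ℕ × ℕ) =>
      (Matrix.of fun μ l => ∑ p ∈ F, x μ p * c p l)) Filter.atTop
      (nhds (Matrix.of fun μ l : Fin n × Fin K => entry β (f μ).1 (f μ).2 l.1 l.2)) := by
    refine tendsto_pi_nhds.mpr fun μ => tendsto_pi_nhds.mpr fun l => ?_
    exact hasSum_entry_factor β (f μ).1 (f μ).2 l.1 l.2
  have hdet := ((Continuous.matrix_det continuous_id).tendsto _).comp hlim
  exact le_of_tendsto' hdet.norm hbound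

/-! ### Choice of parameters -/

theorem log_sixty_le : Real.log 60 ≤ 4.1 := by
  rw [Real.log_le_iff_le_exp (by norm_num)]
  have h1 : Real.exp 4.1 = Real.exp 1 ^ 4 * Real.exp 0.1 := by
    rw [← Real.exp_nat_mul, ← Real.exp_add]; norm_num
  have h2 := Real.exp_one_gt_d9
  have h3 : (1.1:ℝ) ≤ Real.exp 0.1 := by
    have := Real.add_one_le_exp (0.1:ℝ); linarith
  have h4 : (2.718:ℝ) ^ 4 ≤ Real.exp 1 ^ 4 := by gcongr; linarith
  rw [h1]
  nlinarith

theorem log_nineteen_le : Real.log 19 ≤ 2.95 := by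
  rw [Real.log_le_iff_le_exp (by norm_num)]
  have h1 : Real.exp 2.95 = Real.exp 1 ^ 3 * Real.exp (-0.05) := by
    rw [← Real.exp_nat_mul, ← Real.exp_add]; norm_num
  have h2 := Real.exp_one_gt_d9
  have h3 : (0.95:ℝ) ≤ Real.exp (-0.05) := by
    have := Real.add_one_le_exp (-0.05:ℝ); linarith
  have h4 : (2.718:ℝ) ^ 3 ≤ Real.exp 1 ^ 3 := by gcongr; linarith
  rw [h1]
  nlinarith

theorem log_twentytwo_le : Real.log 22 ≤ 3.1 := by
  rw [Real.log_le_iff_le_exp (by norm_num)]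
  have h1 : Real.exp 3.1 = Real.exp 1 ^ 3 * Real.exp 0.1 := by
    rw [← Real.exp_nat_mul, ← Real.exp_add]; norm_num
  have h2 := Real.exp_one_gt_d9
  have h3 : (1.1:ℝ) ≤ Real.exp 0.1 := by
    have := Real.add_one_le_exp (0.1:ℝ); linarith
  have h4 : (2.718:ℝ) ^ 3 ≤ Real.exp 1 ^ 3 := by gcongr; linarith
  rw [h1]
  nlinarith

theorem log_four_le : Real.log 4 ≤ 1.3863 := by
  have h : Real.log 4 = 2 * Real.log 2 := by
    rw [show (4:ℝ) = 2 ^ 2 by norm_num, Real.log_pow]; norm_num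
  have := Real.log_two_lt_d9
  rw [h]; linarith

/-- With the chosen `S`, the degree is small compared with `S / log S`. -/
theorem degree_log_le {D S : ℝ} (hD : 2 ≤ D) (hS : 60 * (D * (1 + Real.log D)) ≤ S) :
    D * (5.1 + Real.log S) ≤ 0.1043 * S := by
  have hu : 0.6931 ≤ Real.log D := by
    have := Real.log_two_gt_d9
    have := Real.log_le_log (by norm_num) hD
    linarith
  set u := Real.log D with hu'
  set s0 := 60 * (D * (1 + u)) with hs0
  have hs0pos : 0 < s0 := by positivity
  have hSpos : 0 < S := hs0pos.trans_le hS
  set r := S / s0 with hr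
  have hr1 : 1 ≤ r := (one_le_div hs0pos).mpr hS
  have hSr : S = r * s0 := by rw [hr]; field_simp
  have h1 : Real.log S ≤ 4.1 + 2 * u + (r - 1) := by
    have h2 := Real.log_le_sub_one_of_pos (show 0 < r by linarith)
    have h3 := Real.log_le_sub_one_of_pos (show 0 < 1 + u by linarith)
    have h4 := log_sixty_le
    rw [hSr, Real.log_mul (by linarith) hs0pos.ne', hs0, Real.log_mul (by norm_num) (by positivity),
      Real.log_mul (by linarith) (by linarith)]
    linarith
  have h5 : 5.1 + Real.log S ≤ r * (9.2 + 2 * u) := by nlinarith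
  calc D * (5.1 + Real.log S) ≤ D * (r * (9.2 + 2 * u)) :=
        mul_le_mul_of_nonneg_left h5 (by linarith)
    _ ≤ D * (r * (6.258 * (1 + u))) := by
        refine mul_le_mul_of_nonneg_left (mul_le_mul_of_nonneg_left ?_ (by linarith)) (by linarith)
        linarith
    _ = 0.1043 * S := by rw [hSr, hs0]; ring

/-- The choice of parameters contradicts the comparison of the arithmetic lower bound with the
analytic upper bound. -/
theorem parameters_ineq {D δ S K B : ℝ} (hD : 2 ≤ D) (hδ : 1 ≤ δ) (hδD : δ ≤ D)
    (hS : 60 * (D * (1 + Real.log D)) ≤ S) (hB : 0 ≤ B) (hK : 3 * (B + δ * (Real.log S + 3)) ≤ K) :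
    δ * (Real.log (60 * S * K) + Real.log 4 * (61 * K) * (1 + Real.log (60 * S)) +
      61 * K * Real.log 2) + (δ - 1) * (K / 2 * Real.log 2 + 30 * S * Real.log S) +
      30 * S * (Real.log (19 * S) + B) + K / 2 * (19 * S + 1) + Real.log 22 + 1 / 2 <
      30 * S * K := by
  have h1 := degree_log_le hD hS
  have hu : 0.6931 ≤ Real.log D := by
    have := Real.log_two_gt_d9
    have := Real.log_le_log (by norm_num) hD
    linarith
  have hDS : 101 * D ≤ S := by nlinarith
  have hSpos : 0 < S := by linarith
  have hlS : 5 ≤ Real.log S := by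
    rw [Real.le_log_iff_exp_le hSpos]
    have h2 := Real.exp_one_lt_d9
    have h4 : Real.exp 1 ^ 5 ≤ (2.72:ℝ) ^ 5 := by gcongr; linarith
    have : Real.exp 5 = Real.exp 1 ^ 5 := by rw [← Real.exp_nat_mul]; norm_num
    rw [this]
    refine h4.trans ?_
    norm_num
    linarith
  have hK24 : 24 ≤ K := by nlinarith
  have hl2 := Real.log_two_lt_d9
  have hl2' := Real.log_two_gt_d9
  have hl4 := log_four_le
  have hl4' : 0 ≤ Real.log 4 := Real.log_nonneg (by norm_num)
  have e1 : Real.log (60 * S * K) ≤ 4.1 + Real.log S + K := by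
    rw [Real.log_mul (by positivity) (by positivity), Real.log_mul (by norm_num) hSpos.ne']
    have := Real.log_le_sub_one_of_pos (show 0 < K by linarith)
    have := log_sixty_le
    linarith
  have e2 : 1 + Real.log (60 * S) ≤ 5.1 + Real.log S := by
    rw [Real.log_mul (by norm_num) hSpos.ne']
    have := log_sixty_le
    linarith
  have e3 : Real.log (19 * S) ≤ 2.95 + Real.log S := by
    rw [Real.log_mul (by norm_num) hSpos.ne']
    have := log_nineteen_le
    linarith
  have hδS : δ * (5.1 + Real.log S) ≤ 0.1043 * S :=
    (mul_le_mul_of_nonneg_right hδD (by linarith)).trans h1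
  have hδS' : 101 * δ ≤ S := by linarith
  have hSK : 0 < S * K := by positivity
  -- the terms of the left-hand side one by one, compared with `S * K`
  have t1 : δ * Real.log (60 * S * K) ≤ 0.02 * (S * K) := by
    have : δ * Real.log (60 * S * K) ≤ δ * (5.1 + Real.log S) + δ * K := by
      have := mul_le_mul_of_nonneg_left e1 (show 0 ≤ δ by linarith)
      nlinarith
    have a1 : δ * K ≤ S / 101 * K := mul_le_mul_of_nonneg_right (by linarith) (by linarith)
    have a2 : S * 24 ≤ S * K := mul_le_mul_of_nonneg_left hK24 hSpos.le
    nlinarith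
  have t2 : δ * (Real.log 4 * (61 * K) * (1 + Real.log (60 * S))) ≤ 8.83 * (S * K) := by
    calc δ * (Real.log 4 * (61 * K) * (1 + Real.log (60 * S)))
        ≤ δ * (Real.log 4 * (61 * K) * (5.1 + Real.log S)) := by gcongr
      _ = Real.log 4 * (61 * K) * (δ * (5.1 + Real.log S)) := by ring
      _ ≤ 1.3863 * (61 * K) * (0.1043 * S) := by gcongr
      _ ≤ 8.83 * (S * K) := by nlinarith
  have t3 : δ * (61 * K * Real.log 2) ≤ 0.42 * (S * K) := by
    calc δ * (61 * K * Real.log 2) ≤ (S / 101) * (61 * K * 0.694) := by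
          gcongr
          · linarith
          · linarith
      _ ≤ _ := by nlinarith
  have t4 : (δ - 1) * (K / 2 * Real.log 2) ≤ 0.01 * (S * K) := by
    calc (δ - 1) * (K / 2 * Real.log 2) ≤ (S / 101) * (K / 2 * 0.694) := by
          gcongr
          · linarith
          · linarith
      _ ≤ _ := by nlinarith
  have t5 : (δ - 1) * (30 * S * Real.log S) + 30 * S * (Real.log (19 * S) + B) ≤ 10 * (S * K) := by
    calc (δ - 1) * (30 * S * Real.log S) + 30 * S * (Real.log (19 * S) + B)
        ≤ (δ - 1) * (30 * S * Real.log S) + 30 * S * (2.95 + Real.log S + B) := by gcongr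
      _ = 10 * S * (3 * (B + δ * Real.log S + 2.95)) := by ring
      _ ≤ 10 * S * K := by
          refine mul_le_mul_of_nonneg_left ?_ (by linarith)
          refine le_trans ?_ hK
          linarith
      _ = _ := by ring
  have t6 : K / 2 * (19 * S + 1) ≤ 9.51 * (S * K) := by nlinarith
  have t7 : Real.log 22 + 1 / 2 ≤ 0.1 * (S * K) := by
    have := log_twentytwo_le
    nlinarith
  nlinarith

/-! ### Distance from algebraic numbers to the period -/

theorem tri_cast (n : ℕ) : (tri n : ℝ) = n * (n - 1) / 2 := by
  induction n with
  | zero => simp [tri]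
  | succ n ih =>
    rw [tri, Finset.sum_range_succ, ← tri, Nat.cast_add, ih]; push_cast; ring

theorem one_le_mahlerZ {Q : ℤ[X]} (hQ : Q ≠ 0) : 1 ≤ mahlerZ Q :=
  one_le_mahlerMeasure_of_ne_zero hQ

theorem norm_omega : ‖omega‖ = 2 * Real.pi := by
  rw [omega, norm_mul, Complex.norm_I, mul_one, norm_mul, Complex.norm_real, Real.norm_eq_abs,
    abs_of_pos Real.pi_pos]
  simp

theorem log_factorial_le (M : ℕ) : Real.log M.factorial ≤ M * Real.log M := by
  rw [← Real.log_pow]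
  refine Real.log_le_log (by exact_mod_cast M.factorial_pos) ?_
  exact_mod_cast Nat.factorial_le_pow M

set_option maxHeartbeats 1000000 in
/-- A root of an irreducible integer polynomial cannot be too close to `2πi`: otherwise the analytic
upper bound for a nonzero interpolation determinant contradicts the arithmetic lower bound. -/
theorem root_approx {Q : ℤ[X]} (hQ : Irreducible Q) (hδ : Q.natDegree ≠ 0) {β : ℂ}
    (hβ : aeval β Q = 0) {D : ℕ} (hD : 2 ≤ D) (hδD : Q.natDegree ≤ D) {S K : ℕ}
    (hS : 60 * ((D:ℝ) * (1 + Real.log D)) ≤ S)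
    (hK : 3 * (Real.log (mahlerZ Q) + Q.natDegree * (Real.log S + 3)) ≤ K) :
    1 / 2 < S * ‖β - omega‖ * Real.exp 1 ^ (60 * S * K) := by
  by_contra! hz
  have hD' : (2:ℝ) ≤ D := by exact_mod_cast hD
  have hu : 0.6931 ≤ Real.log D := by
    have := Real.log_two_gt_d9
    have := Real.log_le_log (by norm_num) hD'
    linarith
  have hS200 : (200:ℝ) ≤ S := by nlinarith
  have hS0 : 0 < S := by
    have : (0:ℝ) < S := by linarith
    exact_mod_cast this
  have hdist : ‖β - omega‖ ≤ 0.005 := by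
    have h1 : (1:ℝ) ≤ Real.exp 1 ^ (60 * S * K) := one_le_pow₀ (Real.one_le_exp (by norm_num))
    have h2 : S * ‖β - omega‖ ≤ 1 / 2 :=
      (le_mul_of_one_le_right (by positivity) h1).trans hz
    have h3 : 200 * ‖β - omega‖ ≤ S * ‖β - omega‖ :=
      mul_le_mul_of_nonneg_right hS200 (norm_nonneg _)
    linarith
  have hom := norm_omega
  have hpi := Real.pi_lt_d4
  have hpi' := Real.pi_gt_d4
  have hβ1 : ‖β‖ ≤ 6.2902 := by
    have := norm_add_le (β - omega) omega
    rw [sub_add_cancel] at this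
    norm_num at *
    linarith
  have hβ0 : β ≠ 0 := by
    rintro rfl
    rw [zero_sub, norm_neg, hom] at hdist
    norm_num at *
    linarith
  have hB : 0 ≤ Real.log (mahlerZ Q) := Real.log_nonneg (one_le_mahlerZ hQ.ne_zero)
  have hδ1 : (1:ℝ) ≤ Q.natDegree := by exact_mod_cast Nat.one_le_iff_ne_zero.mpr hδ
  have hlS : 0 ≤ Real.log S := Real.log_nonneg (by linarith)
  have hK9 : (9:ℝ) ≤ K := by nlinarith
  have hK0 : 0 < K := by
    have : (0:ℝ) < K := by linarith
    exact_mod_cast this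
  obtain ⟨f, hf⟩ := exists_minor (K := K) (n := 60 * S) (S := S) (T := 61 * K) (by omega) β hβ0 (by
    rw [show 61 * K - K + 1 = 60 * K + 1 by omega]
    calc K * (60 * S - 1) ≤ K * (60 * S) := Nat.mul_le_mul_left _ (by omega)
      _ < S * (60 * K + 1) := by nlinarith)
  have hf' : interpDet f β ≠ 0 := hf
  obtain ⟨G, hG1, hG2, hG3⟩ := exists_int_det f
  set M := 60 * S * K with hM
  set q := denom (61 * K) (60 * S) with hq
  have hqpos : (0:ℝ) < q := by exact_mod_cast denom_pos _ _
  have hΓpos : 0 < detBound (60 * S) K S (61 * K) := by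
    rw [detBound, ← hq]
    have : (0:ℝ) < S := by linarith
    positivity
  have hL := liouville hQ hδ hβ (by
    rw [hG2]
    exact mul_ne_zero (pow_ne_zero _ (by exact_mod_cast (denom_pos _ _).ne')) hf') hG1 hΓpos.le hG3
  rw [hG2, norm_mul, norm_pow, Complex.norm_natCast] at hL
  have hA := norm_interpDet_le f β (R := 19 * S) (by linarith) (by
    have h1 := Real.exp_one_lt_d9
    have h2 : (S * ‖β‖ + 1) ≤ 6.3 * (S:ℝ) := by nlinarith
    have h3 : (S * ‖β‖ + 1) * Real.exp 1 ≤ 6.3 * (S:ℝ) * 2.7183 := by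
      gcongr
      linarith
    linarith) hz
  have hΔpos : 0 < ‖interpDet f β‖ := norm_pos_iff.mpr hf'
  have hmpos : 0 < mahlerZ Q := by linarith [one_le_mahlerZ hQ.ne_zero]
  have hSpos : (0:ℝ) < S := by linarith
  -- logarithm of the Liouville inequality, a lower bound for `log |Δ|`
  have hL' := Real.log_le_log one_pos hL
  rw [Real.log_one, Real.log_mul (by positivity) (by positivity),
    Real.log_mul (by positivity) (by positivity), Real.log_mul (by positivity) (by positivity),
    Real.log_pow, Real.log_pow, Real.log_pow, detBound, ← hM, ← hq,
    Real.log_mul (by positivity) (by positivity), Real.log_mul (by positivity) (by positivity),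
    Real.log_mul (by positivity) (by positivity), Real.log_pow, Real.log_pow, Real.log_pow,
    Real.log_mul (by positivity) (by positivity), Real.log_pow,
    Nat.cast_pred (Nat.pos_of_ne_zero hδ)] at hL'
  -- logarithm of the analytic upper bound for `|Δ|`, `Δ` the interpolation determinant
  rw [← hM] at hA
  have hA' := Real.log_le_log hΔpos hA
  rw [Real.log_mul (by positivity) (by positivity), Real.log_mul (by positivity) (by positivity),
    Real.log_mul (by positivity) (by positivity), Real.log_mul (by positivity) (by positivity),
    Real.log_pow, Real.log_pow, Real.log_pow, Real.log_exp, Real.log_exp,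
    Real.log_mul (x := 2 ^ (61 * K)) (by positivity) (by positivity), Real.log_pow] at hA'
  have hlq := log_denom_le (61 * K) (60 * S)
  rw [← hq] at hlq
  have hlF := log_factorial_le M
  have hP := parameters_ineq hD' hδ1 (by exact_mod_cast hδD) hS hB hK
  have hMr : (M:ℝ) = 60 * S * K := by rw [hM]; push_cast; ring
  have hMpos : (0:ℝ) < M := by rw [hMr]; positivity
  have hKpos : (0:ℝ) < K := by linarith
  have ha : ((60 * S * tri K : ℕ) : ℝ) ≤ M * (K / 2) := by
    push_cast
    rw [tri_cast, hMr]
    linarith [mul_pos hSpos hKpos]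
  have hb : ((K * tri (60 * S) : ℕ) : ℝ) ≤ M * (30 * S) := by
    push_cast
    rw [tri_cast, hMr]
    push_cast
    linarith [mul_pos hSpos hKpos]
  have hc : (tri M : ℝ) = M * (30 * S * K) - M * (1 / 2) := by
    rw [tri_cast]
    nth_rewrite 2 [hMr]
    ring
  rw [hc] at hA'
  generalize ((60 * S * tri K : ℕ) : ℝ) = a at *
  generalize ((K * tri (60 * S) : ℕ) : ℝ) = b at *
  push_cast at hL' hA' hlq
  rw [← hMr] at hP
  have hl2 : 0 ≤ Real.log 2 := Real.log_nonneg (by norm_num)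
  have hlR : 0 ≤ Real.log (19 * S) := Real.log_nonneg (by linarith)
  have hR : (0:ℝ) ≤ 19 * S + 1 := by linarith
  generalize Real.log M = lM at *
  generalize Real.log (M.factorial) = lF at *
  generalize Real.log q = lq at *
  generalize Real.log ‖interpDet f β‖ = Δ at *
  generalize Real.log (19 * S) = lR at *
  generalize Real.log (mahlerZ Q) = B at *
  generalize Real.log 4 * (61 * (K:ℝ)) * (1 + Real.log (60 * S)) = q' at *
  generalize Real.log 2 = l2 at *
  generalize Real.log S = lS at *
  generalize Real.log 22 = l22 at *
  generalize (Q.natDegree : ℝ) = δ at *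
  have h1 : M * lq ≤ M * q' := mul_le_mul_of_nonneg_left hlq hMpos.le
  have h2 : b * lR ≤ M * (30 * S) * lR := mul_le_mul_of_nonneg_right hb hlR
  have h3 : a * (19 * S + 1) ≤ M * (K / 2) * (19 * S + 1) := mul_le_mul_of_nonneg_right ha hR
  have h4 : b * B ≤ M * (30 * S) * B := mul_le_mul_of_nonneg_right hb hB
  have h5 : a * l2 ≤ M * (K / 2) * l2 := mul_le_mul_of_nonneg_right ha hl2
  have h6 : b * lS ≤ M * (30 * S) * lS := mul_le_mul_of_nonneg_right hb hlS
  have h7 : (δ - 1) * (lF + (M * (lq + 61 * K * l2) + (a * l2 + b * lS))) ≤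
      (δ - 1) * (M * lM + (M * (q' + 61 * K * l2) + (M * (K / 2) * l2 + M * (30 * S) * lS))) := by
    refine mul_le_mul_of_nonneg_left ?_ (by linarith)
    linarith
  have h8 := mul_lt_mul_of_pos_left hP hMpos
  linarith

/-! ### Irreducible polynomials -/

theorem aeval_derivative_ne_zero {Q : ℤ[X]} (hQ : Irreducible Q) (hδ : Q.natDegree ≠ 0) {β : ℂ}
    (hβ : aeval β Q = 0) : aeval β (derivative Q) ≠ 0 := by
  have hirr : Irreducible (Q.map (algebraMap ℤ ℚ)) :=
    ((hQ.isPrimitive hδ).irreducible_iff_irreducible_map_fraction_map (K := ℚ)).mp hQ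
  have h := hirr.separable.aeval_derivative_ne_zero (x := β) (by rwa [aeval_map_algebraMap])
  rwa [derivative_map, aeval_map_algebraMap] at h

theorem norm_coeff_le_mahlerZ (Q : ℤ[X]) (i : ℕ) :
    ‖((Q.coeff i : ℤ) : ℂ)‖ ≤ Q.natDegree.choose i * mahlerZ Q := by
  have h := norm_coeff_le_choose_mul_mahlerMeasure i (Q.map (Int.castRingHom ℂ))
  rwa [natDegree_map_eq_of_injective (Int.cast_injective : Function.Injective (Int.castRingHom ℂ)),
    coeff_map] at h

theorem norm_aeval_derivative_le (Q : ℤ[X]) (hδ : Q.natDegree ≠ 0) (y : ℂ) :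
    ‖aeval y (derivative Q)‖ ≤
      Q.natDegree * 2 ^ Q.natDegree * mahlerZ Q * max 1 ‖y‖ ^ (Q.natDegree - 1) := by
  obtain ⟨n, hn⟩ := Nat.exists_eq_succ_of_ne_zero hδ
  have hm : 0 ≤ mahlerZ Q := mahlerMeasure_nonneg _
  have hdeg : (derivative Q).natDegree < n + 1 := by
    have := natDegree_derivative_lt hδ
    omega
  rw [aeval_eq_sum_range' hdeg]
  refine (norm_sum_le _ _).trans ?_
  have hterm : ∀ i ∈ Finset.range (n + 1), ‖(derivative Q).coeff i • y ^ i‖ ≤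
      ((n + 1).choose (i + 1)) * (Q.natDegree * mahlerZ Q * max 1 ‖y‖ ^ (Q.natDegree - 1)) := by
    intro i hi
    have hi' : i ≤ n := Nat.lt_succ_iff.mp (Finset.mem_range.mp hi)
    rw [coeff_derivative, zsmul_eq_mul, norm_mul, norm_pow]
    push_cast
    rw [norm_mul]
    have h1 := norm_coeff_le_mahlerZ Q (i + 1)
    rw [hn, Nat.succ_eq_add_one] at h1 ⊢
    have h2 : ‖((i:ℂ) + 1)‖ ≤ ((n + 1 : ℕ) : ℝ) := by
      rw [← Nat.cast_add_one, Complex.norm_natCast]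
      exact_mod_cast Nat.succ_le_succ hi'
    have h3 : ‖y‖ ^ i ≤ max 1 ‖y‖ ^ (n + 1 - 1) :=
      (pow_le_pow_left₀ (norm_nonneg _) (le_max_right _ _) i).trans
        (pow_le_pow_right₀ (le_max_left _ _) (by omega))
    calc _ ≤ ((n + 1).choose (i + 1) * mahlerZ Q) * ((n + 1 : ℕ) : ℝ) *
          max 1 ‖y‖ ^ (n + 1 - 1) := by gcongr
      _ = _ := by ring
  refine (Finset.sum_le_sum hterm).trans ?_
  rw [← Finset.sum_mul]
  have hs : (∑ i ∈ Finset.range (n + 1), ((n + 1).choose (i + 1) : ℝ)) ≤ 2 ^ Q.natDegree := by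
    have := Nat.sum_range_choose (n + 1)
    rw [Finset.sum_range_succ'] at this
    rw [hn]
    have h2 : (∑ i ∈ Finset.range (n + 1), (n + 1).choose (i + 1)) ≤ 2 ^ (n + 1) := by omega
    exact_mod_cast h2
  calc _ ≤ 2 ^ Q.natDegree * (Q.natDegree * mahlerZ Q * max 1 ‖y‖ ^ (Q.natDegree - 1)) := by gcongr
    _ = _ := by ring

/-- If every root of `h` is at most twice as far from `β` as from `w`, then `h β` is controlled
by `h w`. -/
theorem norm_eval_le_of_roots {h : ℂ[X]} {β w : ℂ} (hr : ∀ γ ∈ h.roots, ‖β - γ‖ ≤ 2 * ‖w - γ‖) :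
    ‖h.eval β‖ ≤ 2 ^ h.natDegree * ‖h.eval w‖ := by
  have hs := IsAlgClosed.splits h
  have key : ∀ r : Multiset ℂ, (∀ γ ∈ r, ‖β - γ‖ ≤ 2 * ‖w - γ‖) →
      ‖(r.map (β - ·)).prod‖ ≤ 2 ^ r.card * ‖(r.map (w - ·)).prod‖ := by
    intro r
    induction r using Multiset.induction with
    | empty => simp
    | cons a r ih =>
      intro hr
      rw [Multiset.map_cons, Multiset.prod_cons, Multiset.map_cons, Multiset.prod_cons, norm_mul,
        norm_mul, Multiset.card_cons, pow_succ]
      have h1 := hr a (Multiset.mem_cons_self a r)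
      have h2 := ih fun γ hγ => hr γ (Multiset.mem_cons_of_mem hγ)
      calc _ ≤ (2 * ‖w - a‖) * (2 ^ r.card * ‖(r.map (w - ·)).prod‖) := by gcongr
        _ = _ := by ring
  rw [hs.eval_eq_prod_roots, hs.eval_eq_prod_roots, norm_mul, norm_mul, hs.natDegree_eq_card_roots]
  have := mul_le_mul_of_nonneg_left (key _ hr) (norm_nonneg h.leadingCoeff)
  linarith

/-- The value of a polynomial at `w` is controlled from below by the distance from `w` to the
nearest root `β`, and by the derivative at `β`. -/
theorem exists_near_root {Q : ℤ[X]} (hδ : Q.natDegree ≠ 0) (w : ℂ) :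
    ∃ β : ℂ, aeval β Q = 0 ∧
      ‖β - w‖ * ‖aeval β (derivative Q)‖ ≤ 2 ^ (Q.natDegree - 1) * ‖aeval w Q‖ := by
  have hinj : Function.Injective (Int.castRingHom ℂ) := Int.cast_injective
  have hq0 : Q.map (Int.castRingHom ℂ) ≠ 0 :=
    (Polynomial.map_ne_zero_iff hinj).mpr (by rintro rfl; simp at hδ)
  have hdeg : (Q.map (Int.castRingHom ℂ)).natDegree = Q.natDegree :=
    natDegree_map_eq_of_injective hinj Q
  have hne : (Q.map (Int.castRingHom ℂ)).roots.toFinset.Nonempty := by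
    obtain ⟨z, hz⟩ := IsAlgClosed.exists_root (Q.map (Int.castRingHom ℂ)) (by
      rw [degree_eq_natDegree hq0, hdeg]
      exact_mod_cast hδ)
    exact ⟨z, by simpa [hq0] using hz⟩
  obtain ⟨β, hβ, hmin⟩ := Finset.exists_min_image _ (fun z => ‖z - w‖) hne
  have hβr : (Q.map (Int.castRingHom ℂ)).IsRoot β := by
    rw [Multiset.mem_toFinset] at hβ
    exact isRoot_of_mem_roots hβ
  obtain ⟨h, hh⟩ := dvd_iff_isRoot.mpr hβr
  have hh0 : h ≠ 0 := by rintro rfl; simp [hq0] at hh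
  have hhd : h.natDegree = Q.natDegree - 1 := by
    rw [← hdeg, hh, natDegree_mul (X_sub_C_ne_zero β) hh0, natDegree_X_sub_C]
    omega
  have hder : aeval β (derivative Q) = h.eval β := by
    rw [← eval_map_cast, ← derivative_map, hh]
    simp
  have hw : aeval w Q = (w - β) * h.eval w := by
    rw [← eval_map_cast, hh]
    simp
  refine ⟨β, by rw [← eval_map_cast]; exact hβr, ?_⟩
  have hle : ‖h.eval β‖ ≤ 2 ^ h.natDegree * ‖h.eval w‖ := by
    refine norm_eval_le_of_roots fun γ hγ => ?_
    have hγ' : γ ∈ (Q.map (Int.castRingHom ℂ)).roots.toFinset := by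
      rw [Multiset.mem_toFinset, mem_roots hq0, hh]
      simp [(isRoot_of_mem_roots hγ).eq_zero]
    have h1 := hmin γ hγ'
    have h2 := norm_add_le (β - w) (w - γ)
    rw [sub_add_sub_cancel] at h2
    rw [norm_sub_rev γ w] at h1
    linarith
  rw [hder, hw, norm_mul, ← hhd, norm_sub_rev w β]
  have := mul_le_mul_of_nonneg_left hle (norm_nonneg (β - w))
  linarith

/-- Lower bound at `2πi` for an irreducible polynomial. -/
theorem irreducible_bound {Q : ℤ[X]} (hQ : Irreducible Q) (hδ : Q.natDegree ≠ 0) {D : ℕ}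
    (hD : 2 ≤ D) (hδD : Q.natDegree ≤ D) {S : ℕ} (hS : 60 * ((D:ℝ) * (1 + Real.log D)) ≤ S) :
    Real.exp (-(190 * S * (Real.log (mahlerZ Q) + Q.natDegree * (Real.log S + 4)))) ≤
      ‖aeval omega Q‖ := by
  obtain ⟨β, hβ, hle⟩ := exists_near_root hδ omega
  have hder := aeval_derivative_ne_zero hQ hδ hβ
  have hm1 := one_le_mahlerZ hQ.ne_zero
  have hm0 : 0 < mahlerZ Q := by linarith
  have hδ1 : (1:ℝ) ≤ Q.natDegree := by exact_mod_cast Nat.one_le_iff_ne_zero.mpr hδ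
  have hL := liouville hQ hδ hβ hder (N := Q.natDegree - 1) (by
    have := natDegree_derivative_lt hδ
    omega) (Γ := Q.natDegree * 2 ^ Q.natDegree * mahlerZ Q) (by positivity)
    (norm_aeval_derivative_le Q hδ)
  set K := ⌈3 * (Real.log (mahlerZ Q) + Q.natDegree * (Real.log S + 3))⌉₊ with hKdef
  have hroot := root_approx hQ hδ hβ hD hδD hS (K := K) (Nat.le_ceil _)
  have hD' : (2:ℝ) ≤ D := by exact_mod_cast hD
  have hu : 0.6931 ≤ Real.log D := by
    have := Real.log_two_gt_d9
    have := Real.log_le_log (by norm_num) hD'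
    linarith
  have hDS : 101 * (D:ℝ) ≤ S := by nlinarith
  have hδS : 101 * (Q.natDegree : ℝ) ≤ S := by
    have : (Q.natDegree : ℝ) ≤ D := by exact_mod_cast hδD
    linarith
  have hSpos : (0:ℝ) < S := by linarith
  have hlS : 0 ≤ Real.log S := Real.log_nonneg (by linarith)
  have hB : 0 ≤ Real.log (mahlerZ Q) := Real.log_nonneg hm1
  have hK : (K:ℝ) ≤ 3 * (Real.log (mahlerZ Q) + Q.natDegree * (Real.log S + 3)) + 1 :=
    (Nat.ceil_lt_add_one (by positivity)).le
  have hd0 : 0 < ‖aeval β (derivative Q)‖ := norm_pos_iff.mpr hder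
  have hε0 : 0 < ‖β - omega‖ := by
    rcases (norm_nonneg (β - omega)).eq_or_lt with h | h
    · rw [← h] at hroot; norm_num at hroot
    · exact h
  have hv0 : 0 < ‖aeval omega Q‖ := by
    rcases (norm_nonneg (aeval omega Q)).eq_or_lt with h | h
    · rw [← h, mul_zero] at hle
      exact absurd hle (not_le.mpr (by positivity))
    · exact h
  rw [← Real.le_log_iff_exp_le hv0]
  have hroot' := Real.log_le_log (by norm_num) hroot.le
  rw [Real.log_mul (by positivity) (by positivity), Real.log_mul (by positivity) (by positivity),
    Real.log_pow, Real.log_exp, mul_one, one_div, Real.log_inv] at hroot'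
  have hle' := Real.log_le_log (by positivity) hle
  rw [Real.log_mul (by positivity) (by positivity), Real.log_mul (by positivity) (by positivity),
    Real.log_pow, Nat.cast_pred (Nat.pos_of_ne_zero hδ)] at hle'
  have hL' := Real.log_le_log one_pos hL
  rw [Real.log_one, Real.log_mul (by positivity) (by positivity),
    Real.log_mul (by positivity) (by positivity), Real.log_pow, Real.log_pow,
    Real.log_mul (by positivity) (by positivity), Real.log_mul (by positivity) (by positivity),
    Real.log_pow, Nat.cast_pred (Nat.pos_of_ne_zero hδ)] at hL'
  push_cast at hroot'
  have hl2 : Real.log 2 ≤ 1 := by linarith [Real.log_two_lt_d9]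
  have hl2' : 0 ≤ Real.log 2 := Real.log_nonneg (by norm_num)
  have hlδ : Real.log Q.natDegree ≤ Real.log S := Real.log_le_log (by linarith) (by linarith)
  have hlδ0 : 0 ≤ Real.log Q.natDegree := Real.log_nonneg hδ1
  have hlSS : Real.log S ≤ S := (Real.log_le_sub_one_of_pos hSpos).trans (by linarith)
  have hK' : 60 * (S:ℝ) * K ≤
      60 * S * (3 * (Real.log (mahlerZ Q) + Q.natDegree * (Real.log S + 3)) + 1) :=
    mul_le_mul_of_nonneg_left hK (by positivity)
  generalize (Q.natDegree : ℝ) = δ at *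
  generalize Real.log (mahlerZ Q) = B at *
  generalize Real.log S = lS at *
  generalize (S:ℝ) = s at *
  generalize Real.log δ = lδ at *
  generalize Real.log 2 = l2 at *
  have hsB : 0 ≤ s * B := by positivity
  have hsδ : s ≤ s * δ := le_mul_of_one_le_right hSpos.le hδ1
  have hsδl : 0 ≤ s * (δ * lS) := by positivity
  have h1 : (δ - 1) * (lδ + δ * l2 + B) ≤ s * (lS + δ + B) := by
    refine mul_le_mul (by linarith) ?_ (by positivity) hSpos.le
    have := mul_le_of_le_one_right (show 0 ≤ δ by linarith) hl2
    linarith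
  have h2 : (δ - 1) * B ≤ s * B := mul_le_mul_of_nonneg_right (by linarith) hB
  have h3 : (δ - 1) * l2 ≤ s * 1 := mul_le_mul (by linarith) hl2 hl2' hSpos.le
  have h4 : s * lS ≤ s * (δ * lS) :=
    mul_le_mul_of_nonneg_left (le_mul_of_one_le_left hlS hδ1) hSpos.le
  nlinarith

/-! ### Arbitrary polynomials at the period -/

theorem mahlerZ_mul (F G : ℤ[X]) : mahlerZ (F * G) = mahlerZ F * mahlerZ G := by
  rw [mahlerZ, Polynomial.map_mul, mahlerMeasure_mul]; rfl

/-- A nonzero integer constant is at least `1` in absolute value. -/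
theorem const_bound {G : ℤ[X]} (hG : G ≠ 0) (h0 : G.natDegree = 0) (w : ℂ) :
    1 ≤ ‖aeval w G‖ := by
  obtain ⟨c, rfl⟩ := natDegree_eq_zero.mp h0
  have hc : c ≠ 0 := by rintro rfl; simp at hG
  rw [aeval_C]
  simp only [algebraMap_int_eq, eq_intCast, Complex.norm_intCast]
  exact_mod_cast Int.one_le_abs hc

/-- Lower bound at `2πi` for an arbitrary nonzero integer polynomial: the bound for irreducible
polynomials is multiplicative. -/
theorem general_bound {D : ℕ} (hD : 2 ≤ D) {S : ℕ} (hS : 60 * ((D:ℝ) * (1 + Real.log D)) ≤ S)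
    (G : ℤ[X]) (hG : G ≠ 0) (hGD : G.natDegree ≤ D) :
    Real.exp (-(190 * S * (Real.log (mahlerZ G) + G.natDegree * (Real.log S + 4)))) ≤
      ‖aeval omega G‖ := by
  have hD' : (1:ℝ) ≤ D := by exact_mod_cast (by omega : 1 ≤ D)
  have hlD : 0 ≤ Real.log D := Real.log_nonneg hD'
  have hS1 : (1:ℝ) ≤ S := by nlinarith
  have hlS : 0 ≤ Real.log S := Real.log_nonneg hS1
  have hconst : ∀ F : ℤ[X], F ≠ 0 → F.natDegree = 0 →
      Real.exp (-(190 * S * (Real.log (mahlerZ F) + F.natDegree * (Real.log S + 4)))) ≤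
        ‖aeval omega F‖ := by
    intro F hF hF0
    refine le_trans (Real.exp_le_one_iff.mpr ?_) (const_bound hF hF0 omega)
    have := Real.log_nonneg (one_le_mahlerZ hF)
    rw [neg_nonpos]
    positivity
  induction G using WfDvdMonoid.induction_on_irreducible with
  | zero => exact absurd rfl hG
  | unit u hu => exact hconst u hG (natDegree_eq_zero_of_isUnit hu)
  | mul F Q hF hQ ih =>
    have hdeg : (Q * F).natDegree = Q.natDegree + F.natDegree := natDegree_mul hQ.ne_zero hF
    have h1 := ih hF (by omega)
    have h2 : Real.exp (-(190 * S * (Real.log (mahlerZ Q) + Q.natDegree * (Real.log S + 4)))) ≤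
        ‖aeval omega Q‖ := by
      by_cases hδ : Q.natDegree = 0
      · exact hconst Q hQ.ne_zero hδ
      · exact irreducible_bound hQ hδ hD (by omega) hS
    have m1 := one_le_mahlerZ hF
    have m2 := one_le_mahlerZ hQ.ne_zero
    rw [map_mul, norm_mul, hdeg, mahlerZ_mul, Real.log_mul (by linarith) (by linarith)]
    refine le_trans (le_of_eq ?_) (mul_le_mul h2 h1 (Real.exp_pos _).le (norm_nonneg _))
    rw [← Real.exp_add]
    push_cast
    ring_nf

/-! ### From the period to π -/

/-- The real part of `I ^ j`, as an integer. -/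
def reI (j : ℕ) : ℤ := if Even j then (-1) ^ (j / 2) else 0

/-- The imaginary part of `I ^ j`, as an integer. -/
def imI (j : ℕ) : ℤ := if Even j then 0 else (-1) ^ (j / 2)

theorem I_pow_eq (j : ℕ) : Complex.I ^ j = reI j + Complex.I * imI j := by
  rcases Nat.even_or_odd j with h | h
  · obtain ⟨m, rfl⟩ := h
    have h' : Even (m + m) := ⟨m, rfl⟩
    rw [reI, imI, if_pos h', if_pos h', show (m + m) / 2 = m by omega, ← two_mul, pow_mul,
      Complex.I_sq]
    simp
  · have h' : ¬ Even j := Nat.not_even_iff_odd.mpr h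
    obtain ⟨m, rfl⟩ := h
    rw [reI, imI, if_neg h', if_neg h', show (2 * m + 1) / 2 = m by omega, pow_succ, pow_mul,
      Complex.I_sq]
    push_cast
    ring

theorem neg_I_pow_eq (j : ℕ) : (-Complex.I) ^ j = reI j - Complex.I * imI j := by
  have h := congrArg (starRingEnd ℂ) (I_pow_eq j)
  rw [map_pow, Complex.conj_I] at h
  rw [h]
  simp [sub_eq_add_neg]

/-- The polynomial `2 ^ d * P (σ X / 2)`, for `P` of degree at most `d`. -/
noncomputable def scaled (P : ℤ[X]) (d : ℕ) (σ : ℂ) : ℂ[X] :=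
  ∑ j ∈ Finset.range (d + 1), C ((P.coeff j : ℂ) * 2 ^ (d - j) * σ ^ j) * X ^ j

/-- The polynomial `∑ aⱼ 2 ^ (d - j) cⱼ X ^ j`, where `P = ∑ aⱼ X ^ j`. -/
noncomputable def weighted (P : ℤ[X]) (d : ℕ) (c : ℕ → ℤ) : ℤ[X] :=
  ∑ j ∈ Finset.range (d + 1), C (P.coeff j * 2 ^ (d - j) * c j) * X ^ j

theorem coeff_scaled (P : ℤ[X]) (d : ℕ) (σ : ℂ) (j : ℕ) :
    (scaled P d σ).coeff j =
      if j < d + 1 then (P.coeff j : ℂ) * 2 ^ (d - j) * σ ^ j else 0 := by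
  rw [scaled, finsetSum_coeff]
  simp only [coeff_C_mul, coeff_X_pow, mul_ite, mul_one, mul_zero, Finset.sum_ite_eq,
    Finset.mem_range]

theorem scaled_I (P : ℤ[X]) (d : ℕ) : scaled P d Complex.I =
    (weighted P d reI).map (Int.castRingHom ℂ) +
      C Complex.I * (weighted P d imI).map (Int.castRingHom ℂ) := by
  simp only [scaled, weighted, Polynomial.map_sum, Finset.mul_sum, ← Finset.sum_add_distrib]
  refine Finset.sum_congr rfl fun j _ => ?_
  rw [I_pow_eq]
  simp only [Polynomial.map_mul, Polynomial.map_pow, map_X, map_C, map_mul, map_add, map_pow]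
  simp
  ring

theorem scaled_neg_I (P : ℤ[X]) (d : ℕ) : scaled P d (-Complex.I) =
    (weighted P d reI).map (Int.castRingHom ℂ) -
      C Complex.I * (weighted P d imI).map (Int.castRingHom ℂ) := by
  simp only [scaled, weighted, Polynomial.map_sum, Finset.mul_sum, ← Finset.sum_sub_distrib]
  refine Finset.sum_congr rfl fun j _ => ?_
  rw [neg_I_pow_eq]
  simp only [Polynomial.map_mul, Polynomial.map_pow, map_X, map_C, map_mul, map_sub, map_pow]
  simp
  ring

theorem natDegree_scaled_lt (P : ℤ[X]) (d : ℕ) (σ : ℂ) : (scaled P d σ).natDegree < d + 1 := by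
  rw [Nat.lt_succ_iff, natDegree_le_iff_coeff_eq_zero]
  intro j hj
  rw [coeff_scaled, if_neg (by omega)]

theorem scaled_ne_zero {P : ℤ[X]} (hP : P ≠ 0) {d : ℕ} (hd : P.natDegree ≤ d) {σ : ℂ}
    (hσ : σ ≠ 0) : scaled P d σ ≠ 0 := by
  intro h
  have := congrArg (fun p => p.coeff P.natDegree) h
  simp only [coeff_scaled, coeff_zero] at this
  rw [if_pos (by omega)] at this
  simp [hσ, hP] at this

theorem polyLength_eq {P : ℤ[X]} {d : ℕ} (hd : P.natDegree ≤ d) :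
    polyLength P = ∑ j ∈ Finset.range (d + 1), |(P.coeff j : ℝ)| := by
  refine Finset.sum_subset (Finset.range_mono (by omega)) fun j _ hj => ?_
  rw [Finset.mem_range, not_lt] at hj
  rw [coeff_eq_zero_of_natDegree_lt (by omega)]
  simp

theorem mahlerMeasure_scaled_le {P : ℤ[X]} {d : ℕ} (hd : P.natDegree ≤ d) {σ : ℂ}
    (hσ : ‖σ‖ = 1) : (scaled P d σ).mahlerMeasure ≤ 2 ^ d * polyLength P := by
  refine (mahlerMeasure_le_sum_norm_coeff _).trans ?_
  rw [sum_over_range' _ (fun _ => norm_zero) (d + 1) (natDegree_scaled_lt P d σ),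
    polyLength_eq hd, Finset.mul_sum]
  refine Finset.sum_le_sum fun j hj => ?_
  rw [coeff_scaled, if_pos (Finset.mem_range.mp hj), norm_mul, norm_mul, norm_pow, norm_pow, hσ,
    one_pow, mul_one, Complex.norm_intCast, mul_comm]
  refine mul_le_mul_of_nonneg_right ?_ (abs_nonneg _)
  rw [Complex.norm_ofNat]
  exact pow_le_pow_right₀ (by norm_num) (by omega)

theorem eval_scaled {P : ℤ[X]} {d : ℕ} (hd : P.natDegree ≤ d) (σ : ℂ) (y : ℂ) :
    (scaled P d σ).eval (2 * y) = 2 ^ d * aeval (σ * y) P := by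
  rw [scaled, eval_finsetSum, aeval_eq_sum_range' (Nat.lt_succ_of_le hd), Finset.mul_sum]
  refine Finset.sum_congr rfl fun j hj => ?_
  have hj' : j ≤ d := Nat.lt_succ_iff.mp (Finset.mem_range.mp hj)
  simp only [eval_mul, eval_C, eval_pow, eval_X, zsmul_eq_mul]
  rw [← Nat.sub_add_cancel hj', pow_add, Nat.add_sub_cancel]
  ring

theorem norm_aeval_le {P : ℤ[X]} {d : ℕ} (hd : P.natDegree ≤ d) {y : ℂ} (hy : 1 ≤ ‖y‖) :
    ‖aeval y P‖ ≤ polyLength P * ‖y‖ ^ d := by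
  rw [aeval_eq_sum_range' (Nat.lt_succ_of_le hd), polyLength_eq hd, Finset.sum_mul]
  refine (norm_sum_le _ _).trans (Finset.sum_le_sum fun j hj => ?_)
  rw [zsmul_eq_mul, norm_mul, norm_pow, Complex.norm_intCast]
  have hj' : j ≤ d := Nat.lt_succ_iff.mp (Finset.mem_range.mp hj)
  gcongr

/-- There is an integer polynomial `G` of degree at most `2d` with
`G (2πi) = 4 ^ d * P π * P (-π)`: the product of the two polynomials `2 ^ d * P (± X / 2i)`. -/
theorem exists_descent {P : ℤ[X]} (hP : P ≠ 0) {d : ℕ} (hd : P.natDegree ≤ d) :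
    ∃ G : ℤ[X], G ≠ 0 ∧ G.natDegree ≤ 2 * d ∧ mahlerZ G ≤ (2 ^ d * polyLength P) ^ 2 ∧
      ‖aeval omega G‖ ≤ 4 ^ d * |aeval Real.pi P| * (polyLength P * Real.pi ^ d) := by
  have hmap : (weighted P d reI ^ 2 + weighted P d imI ^ 2).map (Int.castRingHom ℂ) =
      scaled P d (-Complex.I) * scaled P d Complex.I := by
    rw [scaled_I, scaled_neg_I]
    have hI : (C Complex.I : ℂ[X]) ^ 2 = -1 := by rw [← C_pow, Complex.I_sq]; simp
    simp only [Polynomial.map_add, Polynomial.map_pow]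
    linear_combination (((weighted P d imI).map (Int.castRingHom ℂ)) ^ 2) * hI
  have hinj : Function.Injective (Int.castRingHom ℂ) := Int.cast_injective
  have hIn : ‖Complex.I‖ = 1 := Complex.norm_I
  have hIn' : ‖-Complex.I‖ = 1 := by rw [norm_neg, hIn]
  have hI0 : -Complex.I ≠ 0 := neg_ne_zero.mpr Complex.I_ne_zero
  have hlen : 0 ≤ polyLength P := by
    rw [polyLength_eq hd]; positivity
  refine ⟨weighted P d reI ^ 2 + weighted P d imI ^ 2, ?_, ?_, ?_, ?_⟩
  · rw [← Polynomial.map_ne_zero_iff hinj, hmap]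
    exact mul_ne_zero (scaled_ne_zero hP hd hI0) (scaled_ne_zero hP hd Complex.I_ne_zero)
  · rw [← natDegree_map_eq_of_injective hinj, hmap]
    refine natDegree_mul_le.trans ?_
    have h1 := natDegree_scaled_lt P d Complex.I
    have h2 := natDegree_scaled_lt P d (-Complex.I)
    omega
  · rw [mahlerZ, hmap, mahlerMeasure_mul, sq]
    exact mul_le_mul (mahlerMeasure_scaled_le hd hIn') (mahlerMeasure_scaled_le hd hIn)
      (mahlerMeasure_nonneg _) (by positivity)
  · have hω : omega = 2 * (Real.pi * Complex.I) := by rw [omega]; ring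
    have e1 : -Complex.I * (Real.pi * Complex.I) = ((Real.pi : ℝ) : ℂ) := by
      linear_combination (-(Real.pi : ℂ)) * Complex.I_sq
    have e2 : ‖Complex.I * (Real.pi * Complex.I)‖ = Real.pi := by
      rw [norm_mul, norm_mul, hIn, Complex.norm_real, Real.norm_eq_abs, abs_of_pos Real.pi_pos]
      ring
    have e3 : ‖aeval ((Real.pi : ℝ) : ℂ) P‖ = |aeval Real.pi P| := by
      have := aeval_algebraMap_apply ℂ Real.pi P
      rw [Complex.coe_algebraMap] at this
      rw [this, Complex.norm_real, Real.norm_eq_abs]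
    have h1 := norm_aeval_le hd (y := Complex.I * (Real.pi * Complex.I)) (by
      rw [e2]; linarith [Real.pi_gt_three])
    rw [e2] at h1
    rw [← eval_map_cast, hmap, eval_mul, hω, eval_scaled hd, eval_scaled hd, e1, norm_mul,
      norm_mul, norm_mul, e3, norm_pow, Complex.norm_ofNat]
    calc _ = 4 ^ d * |aeval Real.pi P| * ‖aeval (Complex.I * (Real.pi * Complex.I)) P‖ := by
          rw [show (4:ℝ) = 2 * 2 by norm_num, mul_pow]; ring
      _ ≤ _ := by gcongr

/-- The final numerical comparison, with `u = log d` and `l = log L`. -/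
theorem final_ineq {d u l S : ℝ} (hd1 : 1 ≤ d) (hu : u = Real.log d) (hl : 1.09 ≤ l)
    (hdul : d ≤ l + 1.45 * (d * u)) (hS1 : 1 ≤ S)
    (hS : S ≤ 60 * (2 * d * (1 + Real.log (2 * d))) + 1) :
    190 * S * (2 * (d * Real.log 2 + l) + 2 * d * (Real.log S + 4)) +
      (d * Real.log 4 + l + d * Real.log Real.pi) ≤ 2000000 * d * (l + d * u) * (1 + u) := by
  have hu0 : 0 ≤ u := by rw [hu]; exact Real.log_nonneg hd1
  have hl2 := Real.log_two_lt_d9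
  have hl4 := log_four_le
  have hlpi : Real.log Real.pi ≤ 2.2 :=
    (Real.log_le_sub_one_of_pos Real.pi_pos).trans (by linarith [Real.pi_lt_d2])
  have hS2 : S ≤ d * (204.2 * (1 + u)) := by
    rw [Real.log_mul (by norm_num) (by linarith), ← hu] at hS
    nlinarith
  have hlS : Real.log S ≤ 5.55 + 2 * u := by
    have h1 := Real.log_le_log (by linarith) hS2
    rw [Real.log_mul (by linarith) (by positivity), Real.log_mul (by norm_num) (by positivity),
      ← hu] at h1
    have h2 := Real.log_le_sub_one_of_pos (show 0 < 1 + u by linarith)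
    have h3 : Real.log 204.2 ≤ 5.546 := by
      have h4 : Real.log 204.2 ≤ Real.log (2 ^ 8) := Real.log_le_log (by norm_num) (by norm_num)
      rw [Real.log_pow] at h4
      norm_num at h4 ⊢
      linarith
    linarith
  have hdu : 0 ≤ d * u := by positivity
  have hX : 2 * (d * Real.log 2 + l) + 2 * d * (Real.log S + 4) ≤ 23 * l + 35 * (d * u) := by
    nlinarith
  have hA : 190 * S * (2 * (d * Real.log 2 + l) + 2 * d * (Real.log S + 4)) ≤
      190 * (d * (204.2 * (1 + u))) * (23 * l + 35 * (d * u)) := by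
    have h2 : 0 ≤ Real.log 2 := Real.log_nonneg (by norm_num)
    have h3 : 0 ≤ Real.log S := Real.log_nonneg hS1
    gcongr
  have hB : d * Real.log 4 + l + d * Real.log Real.pi ≤ 5 * l + 6 * (d * u) := by
    nlinarith
  have hC : 5 * l + 6 * (d * u) ≤ (5 * l + 6 * (d * u)) * (d * (1 + u)) :=
    le_mul_of_one_le_right (by positivity) (by nlinarith)
  have hD : 0 ≤ d * (1 + u) * l := by positivity
  have hE : 0 ≤ d * (1 + u) * (d * u) := by positivity
  linarith

/-- **Theorem 2, part 2.** For a nonzero `P ∈ ℤ[x]` with `deg P ≤ d`, `L(P) ≤ L`, `L ≥ 3`: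
`|P(π)| ≥ exp(−2·10⁶ d (log L + d log d) (1 + log d))`. -/
theorem pi_transcendence_measure (P : Polynomial ℤ) (hP : P ≠ 0)
    (d : ℕ) (hd : P.natDegree ≤ d)
    (L : ℝ) (hL : polyLength P ≤ L) (hL3 : 3 ≤ L) :
    Real.exp (-(2000000 * d * (Real.log L + d * Real.log d) * (1 + Real.log d))) ≤
      |Polynomial.aeval Real.pi P| := by
  rcases Nat.eq_zero_or_pos d with rfl | hd0
  · obtain ⟨c, rfl⟩ := natDegree_eq_zero.mp (Nat.le_zero.mp hd)
    have hc : c ≠ 0 := by rintro rfl; simp at hP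
    rw [aeval_C]
    simp only [algebraMap_int_eq, eq_intCast, Nat.cast_zero, mul_zero, zero_mul, neg_zero,
      Real.exp_zero]
    exact_mod_cast Int.one_le_abs hc
  obtain ⟨G, hG0, hGd, hGm, hGv⟩ := exists_descent hP hd
  have hd1 : (1:ℝ) ≤ d := by exact_mod_cast hd0
  set S := ⌈60 * (((2 * d : ℕ):ℝ) * (1 + Real.log (2 * d : ℕ)))⌉₊ with hSdef
  have hS : 60 * (((2 * d : ℕ):ℝ) * (1 + Real.log (2 * d : ℕ))) ≤ S := Nat.le_ceil _
  have hl2d : 0 ≤ Real.log (2 * d : ℕ) := Real.log_natCast_nonneg _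
  have hS' : (S:ℝ) ≤ 60 * (((2 * d : ℕ):ℝ) * (1 + Real.log (2 * d : ℕ))) + 1 :=
    (Nat.ceil_lt_add_one (by positivity)).le
  have hgen := general_bound (D := 2 * d) (by omega) hS G hG0 hGd
  push_cast at hS hS' hl2d
  have hS1 : (1:ℝ) ≤ S := by nlinarith
  have hlS : 0 ≤ Real.log S := Real.log_nonneg hS1
  have hl : 1.09 ≤ Real.log L := by
    have h1 : Real.log 3 ≤ Real.log L := Real.log_le_log (by norm_num) hL3
    have h2 := Real.log_three_gt_d9
    linarith
  have hdul : (d:ℝ) ≤ Real.log L + 1.45 * (d * Real.log d) := by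
    rcases Nat.lt_or_ge d 2 with h | h
    · obtain rfl : d = 1 := by omega
      norm_num
      linarith
    · have h1 : Real.log 2 ≤ Real.log d := Real.log_le_log (by norm_num) (by exact_mod_cast h)
      have h2 := Real.log_two_gt_d9
      nlinarith
  have hfin := final_ineq hd1 rfl hl hdul hS1 hS'
  have hLpos : 0 < L := by linarith
  have hpi := Real.pi_pos
  have hm : Real.log (mahlerZ G) ≤ 2 * (d * Real.log 2 + Real.log L) := by
    have hlen : 0 ≤ polyLength P := Finset.sum_nonneg fun _ _ => abs_nonneg _
    have h1 : mahlerZ G ≤ (2 ^ d * L) ^ 2 := hGm.trans (by gcongr)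
    have h2 := Real.log_le_log (by linarith [one_le_mahlerZ hG0]) h1
    rw [Real.log_pow, Real.log_mul (by positivity) hLpos.ne', Real.log_pow] at h2
    exact_mod_cast h2
  have hGd' : (G.natDegree : ℝ) ≤ 2 * d := by exact_mod_cast hGd
  have hexp : 190 * S * (Real.log (mahlerZ G) + G.natDegree * (Real.log S + 4)) ≤
      190 * S * (2 * (d * Real.log 2 + Real.log L) + 2 * d * (Real.log S + 4)) := by
    gcongr
  have hconst : Real.exp (d * Real.log 4 + Real.log L + d * Real.log Real.pi) =
      4 ^ d * (L * Real.pi ^ d) := by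
    rw [Real.exp_add, Real.exp_add, Real.exp_log hLpos, Real.exp_nat_mul, Real.exp_nat_mul,
      Real.exp_log hpi, Real.exp_log (by norm_num)]
    ring
  have hv : ‖aeval omega G‖ ≤
      |aeval Real.pi P| * Real.exp (d * Real.log 4 + Real.log L + d * Real.log Real.pi) := by
    rw [hconst]
    refine hGv.trans ?_
    calc _ ≤ 4 ^ d * |aeval Real.pi P| * (L * Real.pi ^ d) := by gcongr
      _ = _ := by ring
  refine le_of_mul_le_mul_right ?_
    (Real.exp_pos (d * Real.log 4 + Real.log L + d * Real.log Real.pi))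
  refine le_trans ?_ (hgen.trans hv)
  rw [← Real.exp_add]
  exact Real.exp_le_exp.mpr (by linarith)
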